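/- The node formulae of Conditional XPath (CXPath) have precisely the expressive power of unary FO queries over ordered unranked Σ-trees: a unary query is definable by a CXPath node formula if and only if it is definable by an FO formula in one free variable. -/

import Mathlib

/-!
**From first-order logic to Conditional XPath.** The truth of a first-order formula of quantifier rank
`k` at a node depends only on the class of the pointed tree under the `k`-round
Ehrenfeucht–Fraïssé game (`BF.sat`), and there are finitely many classes, so it suffices to define the
class of a node by a node formula.

Types compose: when a structure is glued from pieces in such a way that the relations between
different pieces depend only on marked points, its type is determined by the types of the pieces
(`IsSum.bf`). Hence the `k`-types form finite monoids under gluing, and these are aperiodic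
(`KType.aperiodic`), because `k` rounds cannot tell apart two large numbers of copies.

The monoids meet path formulas in a version of Kamp's theorem (`kamp`). Let the nodes be labelled
definably by elements of a finite aperiodic monoid. Then, along a deterministic step (parent, next or
previous sibling), the relation saying that the path from `x` to `y` has product `m` is given by a path
formula. The proof is by induction with local divisors: a path is cut at the occurrences of a letter
`c ≠ 1` (`PP_split`), the segments in between use fewer letters, and the word of segments is evaluated
in the local divisor at `c`, which is a smaller aperiodic monoid.

The definability of the type of the forest below a node (`belowT_def`) now follows by induction on
`k`. If the `k`-types of such forests are definable, then `kamp` along siblings defines the types of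
the forests to the left and right of a node, hence of its context, and `kamp` along the parent step
defines the relation `Theta k σ t s`: the regions of the forest below `s` situated above, to the left
of, to the right of and below the node `t`, and the label of `t`, are as prescribed by `σ`. By the
composition lemma these data determine the `k`-type of the forest with `t` as a named point
(`Theta_bf`). The `(k + 1)`-type of the forest is therefore determined by the `k`-type and the set of
those `σ` that occur. Applying `Theta` with the root as `s` gives the type of a node in the whole tree
(`defN_of_fo`).

**From Conditional XPath to first-order logic.** This is a structural translation (`CXNode.fo`). Each
step or its converse is deterministic, so the nodes visited by `(step/?α)⁺` are exactly those
between the end points, and the operator is expressed by the descendant and sibling orders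
(`until_iff`).
-/

namespace UnrankedTrees

/-! ### Unranked trees: tree domains and ordered unranked Σ-trees.
Nodes are finite strings over ℕ; a tree domain is a finite prefix-closed set
of nodes such that `s ++ [i] ∈ D` implies `s ++ [j] ∈ D` for all `j < i`. -/

abbrev Node : Type := List ℕ

/-- An ordered unranked tree over alphabet `A`: a tree domain with a labeling. -/
structure UTree (A : Type) where
  dom : Finset Node
  nil_mem : ([] : Node) ∈ dom
  prefix_closed : ∀ ⦃s t : Node⦄, s ∈ dom → t <+: s → t ∈ dom
  sib_closed : ∀ ⦃s : Node⦄ ⦃i j : ℕ⦄, s ++ [i] ∈ dom → j < i → s ++ [j] ∈ dom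
  label : Node → A

namespace UTree

variable {A : Type}

/-- The child relation `≺_ch`. -/
def childR (T : UTree A) (s t : Node) : Prop :=
  s ∈ T.dom ∧ t ∈ T.dom ∧ ∃ i : ℕ, t = s ++ [i]

/-- The descendant-or-self relation `≺*_ch` (the prefix relation). -/
def descR (T : UTree A) (s t : Node) : Prop :=
  s ∈ T.dom ∧ t ∈ T.dom ∧ s <+: t

/-- The next-sibling relation `≺_ns`. -/
def nsR (T : UTree A) (s t : Node) : Prop :=
  s ∈ T.dom ∧ t ∈ T.dom ∧ ∃ (u : Node) (i : ℕ), s = u ++ [i] ∧ t = u ++ [i + 1]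

/-- The sibling ordering `≺*_ns` (reflexive-transitive closure of next-sibling). -/
def sibR (T : UTree A) (s t : Node) : Prop :=
  s ∈ T.dom ∧ t ∈ T.dom ∧ ∃ (u : Node) (i j : ℕ), s = u ++ [i] ∧ t = u ++ [j] ∧ i ≤ j

/-- The first-child relation `≺_fc`. -/
def firstChildR (T : UTree A) (s t : Node) : Prop :=
  s ∈ T.dom ∧ t ∈ T.dom ∧ t = s ++ [0]

/-- The number of children of a node. -/
noncomputable def childCount (T : UTree A) (s : Node) : ℕ :=
  Set.ncard {i : ℕ | s ++ [i] ∈ T.dom}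

/-- The list of children of a node `s`, in sibling order: `s·0, …, s·(n-1)`. -/
noncomputable def childrenList (T : UTree A) (s : Node) : List Node :=
  (List.range (T.childCount s)).map fun i => s ++ [i]

/-- `s` is a leaf of `T`. -/
def isLeaf (T : UTree A) (s : Node) : Prop :=
  s ∈ T.dom ∧ ∀ i : ℕ, s ++ [i] ∉ T.dom

/-- `s` has no next sibling in `T` (the root also counts as "last"). -/
def isLast (T : UTree A) (s : Node) : Prop :=
  s = [] ∨ ∃ (u : Node) (i : ℕ), s = u ++ [i] ∧ u ++ [i + 1] ∉ T.dom

end UTree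

/-! ### First-order logic over ordered unranked trees. -/

inductive FO (A : Type) : Type where
  | eq : ℕ → ℕ → FO A
  | desc : ℕ → ℕ → FO A                -- x ≺*_ch y
  | sib : ℕ → ℕ → FO A                 -- x ≺*_ns y
  | lab : A → ℕ → FO A                 -- P_a(x)
  | not : FO A → FO A
  | and : FO A → FO A → FO A
  | ex : ℕ → FO A → FO A

namespace FO

variable {A : Type}

def Sat (T : UTree A) (v : ℕ → Node) : FO A → Prop
  | .eq x y => v x = v y
  | .desc x y => T.descR (v x) (v y)
  | .sib x y => T.sibR (v x) (v y)
  | .lab a x => v x ∈ T.dom ∧ T.label (v x) = a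
  | .not φ => ¬ Sat T v φ
  | .and φ ψ => Sat T v φ ∧ Sat T v ψ
  | .ex n φ => ∃ s ∈ T.dom, Sat T (Function.update v n s) φ

/-- `φ`, as a sentence, defines the Boolean query `L`. -/
def DefinesB (φ : FO A) (L : Set (UTree A)) : Prop :=
  ∀ (T : UTree A) (v : ℕ → Node), T ∈ L ↔ Sat T v φ

/-- `φ`, with the single free variable `0`, defines the unary query `Q`. -/
def DefinesU (φ : FO A) (Q : UTree A → Set Node) : Prop :=
  ∀ (T : UTree A) (v : ℕ → Node) (s : Node), s ∈ T.dom →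
    (s ∈ Q T ↔ Sat T (Function.update v 0 s) φ)

end FO

/-! ### XPath steps. -/

inductive XStep : Type where
  | ch : XStep        -- ≺_ch
  | chI : XStep       -- ≺_ch⁻
  | ns : XStep        -- ≺_ns
  | nsI : XStep       -- ≺_ns⁻

def XStep.rel {A : Type} (T : UTree A) : XStep → Node → Node → Prop
  | .ch => T.childR
  | .chI => fun s t => T.childR t s
  | .ns => T.nsR
  | .nsI => fun s t => T.nsR t s

/-! ### Conditional XPath: node formulas and path formulas. -/

mutual
  inductive CXNode (A : Type) : Type where
    | lab : A → CXNode A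
    | not : CXNode A → CXNode A
    | or : CXNode A → CXNode A → CXNode A
    | E : CXPath A → CXNode A
  inductive CXPath (A : Type) : Type where
    | test : CXNode A → CXPath A                 -- ?α
    | step : XStep → CXPath A
    | until : XStep → CXNode A → CXPath A        -- (step/?α)⁺
    | comp : CXPath A → CXPath A → CXPath A
    | or : CXPath A → CXPath A → CXPath A
end

mutual
  def CXNode.Sat {A : Type} (T : UTree A) : Node → CXNode A → Prop
    | s, .lab a => s ∈ T.dom ∧ T.label s = a
    | s, .not α => ¬ CXNode.Sat T s α
    | s, .or α β => CXNode.Sat T s α ∨ CXNode.Sat T s β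
    | s, .E β => ∃ t : Node, CXPath.Sat T s t β
  def CXPath.Sat {A : Type} (T : UTree A) : Node → Node → CXPath A → Prop
    | s, t, .test α => s = t ∧ CXNode.Sat T s α
    | s, t, .step st => st.rel T s t
    | s, t, .until st α => ∃ p : List Node, p ≠ [] ∧
        List.Chain' (st.rel T) (s :: p) ∧
        (s :: p).getLast (List.cons_ne_nil _ _) = t ∧
        ∀ u ∈ p, CXNode.Sat T u α
    | s, t, .comp β γ => ∃ u : Node, CXPath.Sat T s u β ∧ CXPath.Sat T u t γ
    | s, t, .or β γ => CXPath.Sat T s t β ∨ CXPath.Sat T s t γ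
end

section Proof

open Relation

variable {A : Type}

/-! ### Back-and-forth equivalence, sums and type monoids -/

/-- Labelled structures with two binary relations: `D` plays the descendant-or-self relation, `B` the
strict sibling order, `L` is the labelling. `U` is a set of marked points; when structures are glued
together, the relations between points of different pieces depend on the marks only. -/
structure Str (A : Type) where
  C : Type
  D : C → C → Prop
  B : C → C → Prop
  L : C → A
  U : C → Prop

/-- The set of pairs `p` is a partial isomorphism. -/
def Agree (M N : Str A) (p : Set (M.C × N.C)) : Prop :=
  ∀ a ∈ p, M.L a.1 = N.L a.2 ∧ (M.U a.1 ↔ N.U a.2) ∧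
    ∀ b ∈ p, (a.1 = b.1 ↔ a.2 = b.2) ∧ (M.D a.1 b.1 ↔ N.D a.2 b.2) ∧
      (M.B a.1 b.1 ↔ N.B a.2 b.2)

/-- Duplicator wins the `k`-round Ehrenfeucht–Fraïssé game between `M` and `N` from the position `p`. -/
def BF (M N : Str A) : ℕ → Set (M.C × N.C) → Prop
  | 0, p => Agree M N p
  | k + 1, p => BF M N k p ∧ (∀ x, ∃ y, BF M N k (insert (x, y) p)) ∧
      (∀ y, ∃ x, BF M N k (insert (x, y) p))

theorem BF.mono {M N : Str A} {k : ℕ} : ∀ {p q : Set (M.C × N.C)}, q ⊆ p → BF M N k p → BF M N k q := by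
  induction k with
  | zero =>
    intro p q h hp a ha
    obtain ⟨h1, h2, h3⟩ := hp a (h ha)
    exact ⟨h1, h2, fun b hb => h3 b (h hb)⟩
  | succ k ih =>
    rintro p q h ⟨h1, h2, h3⟩
    refine ⟨ih h h1, fun x => ?_, fun y => ?_⟩
    · obtain ⟨y, hy⟩ := h2 x
      exact ⟨y, ih (Set.insert_subset_insert h) hy⟩
    · obtain ⟨x, hx⟩ := h3 y
      exact ⟨x, ih (Set.insert_subset_insert h) hx⟩

theorem BF.symm {M N : Str A} {k : ℕ} : ∀ {p : Set (M.C × N.C)}, BF M N k p →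
    BF N M k (Prod.swap ⁻¹' p) := by
  induction k with
  | zero =>
    rintro p hp ⟨a, a'⟩ ha
    obtain ⟨h1, h2, h3⟩ := hp (a', a) ha
    refine ⟨h1.symm, h2.symm, ?_⟩
    rintro ⟨b, b'⟩ hb
    obtain ⟨h4, h5, h6⟩ := h3 (b', b) hb
    exact ⟨h4.symm, h5.symm, h6.symm⟩
  | succ k ih =>
    rintro p ⟨h1, h2, h3⟩
    refine ⟨ih h1, fun x => ?_, fun y => ?_⟩
    · obtain ⟨y, hy⟩ := h3 x
      refine ⟨y, (ih hy).mono ?_⟩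
      rintro ⟨a, b⟩ (h | h)
      · left; simp_all
      · right; exact h
    · obtain ⟨x, hx⟩ := h2 y
      refine ⟨x, (ih hx).mono ?_⟩
      rintro ⟨a, b⟩ (h | h)
      · left; simp_all
      · right; exact h

/-- Composition of strategies; every pair of the resulting position factors through a common middle
point. -/
theorem BF.trans {M N K : Str A} {k : ℕ} : ∀ {p : Set (M.C × N.C)} {q : Set (N.C × K.C)}
    {r : Set (M.C × K.C)}, BF M N k p → BF N K k q →
    (∀ a ∈ r, ∃ y, (a.1, y) ∈ p ∧ (y, a.2) ∈ q) → BF M K k r := by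
  induction k with
  | zero =>
    intro p q r hp hq hr a ha
    obtain ⟨y, h1, h2⟩ := hr a ha
    obtain ⟨l1, u1, c1⟩ := hp _ h1
    obtain ⟨l2, u2, c2⟩ := hq _ h2
    refine ⟨l1.trans l2, u1.trans u2, fun b hb => ?_⟩
    obtain ⟨z, h3, h4⟩ := hr b hb
    obtain ⟨e1, d1, b1⟩ := c1 _ h3
    obtain ⟨e2, d2, b2⟩ := c2 _ h4
    exact ⟨e1.trans e2, d1.trans d2, b1.trans b2⟩
  | succ k ih =>
    rintro p q r ⟨p1, p2, p3⟩ ⟨q1, q2, q3⟩ hr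
    refine ⟨ih p1 q1 hr, fun x => ?_, fun z => ?_⟩
    · obtain ⟨y, hy⟩ := p2 x
      obtain ⟨z, hz⟩ := q2 y
      refine ⟨z, ih hy hz ?_⟩
      rintro a (rfl | ha)
      · exact ⟨y, Or.inl rfl, Or.inl rfl⟩
      · obtain ⟨w, h1, h2⟩ := hr a ha
        exact ⟨w, Or.inr h1, Or.inr h2⟩
    · obtain ⟨y, hy⟩ := q3 z
      obtain ⟨x, hx⟩ := p3 y
      refine ⟨x, ih hx hy ?_⟩
      rintro a (rfl | ha)
      · exact ⟨y, Or.inl rfl, Or.inl rfl⟩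
      · obtain ⟨w, h1, h2⟩ := hr a ha
        exact ⟨w, Or.inr h1, Or.inr h2⟩

/-- The bijection `e` is an isomorphism of structures. -/
structure StrIso (M N : Str A) (e : M.C ≃ N.C) : Prop where
  L : ∀ x, N.L (e x) = M.L x
  U : ∀ x, N.U (e x) ↔ M.U x
  D : ∀ x y, N.D (e x) (e y) ↔ M.D x y
  B : ∀ x y, N.B (e x) (e y) ↔ M.B x y

theorem StrIso.bf {M N : Str A} {e : M.C ≃ N.C} (h : StrIso M N e) (k : ℕ) :
    BF M N k {a | a.2 = e a.1} := by
  induction k with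
  | zero =>
    rintro ⟨a, a'⟩ ha
    obtain rfl : a' = e a := ha
    refine ⟨(h.L _).symm, (h.U _).symm, ?_⟩
    rintro ⟨b, b'⟩ hb
    obtain rfl : b' = e b := hb
    exact ⟨e.injective.eq_iff.symm, (h.D _ _).symm, (h.B _ _).symm⟩
  | succ k ih =>
    refine ⟨ih, fun x => ⟨e x, ih.mono ?_⟩, fun y => ⟨e.symm y, ih.mono ?_⟩⟩
    · rintro a (rfl | ha)
      · rfl
      · exact ha
    · rintro a (rfl | ha)
      · simp
      · exact ha

theorem BF.refl (M : Str A) (k : ℕ) : BF M M k {a | a.2 = a.1} :=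
  StrIso.bf (e := Equiv.refl _) ⟨fun _ => rfl, fun _ => Iff.rfl, fun _ _ => Iff.rfl, fun _ _ => Iff.rfl⟩ k

/-- The structure `M` is a disjoint union of the pieces `P i`, embedded by `e i`. Between distinct
pieces `i`, `j` the relations of `M` are computed from the marks of the two points by `cD i j` and
`cB i j`, and the marks of `M` are computed from those of the pieces by `cU i`. -/
structure IsSum {ι : Type} (P : ι → Str A) (M : Str A) (e : ∀ i, (P i).C → M.C)
    (cD cB : ι → ι → Prop → Prop → Prop) (cU : ι → Prop → Prop) : Prop where
  surj : ∀ m, ∃ i x, e i x = m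
  inj : ∀ i j x y, e i x = e j y → i = j
  inj' : ∀ i x y, e i x = e i y → x = y
  L : ∀ i x, M.L (e i x) = (P i).L x
  U : ∀ i x, M.U (e i x) ↔ cU i ((P i).U x)
  D : ∀ i x y, M.D (e i x) (e i y) ↔ (P i).D x y
  B : ∀ i x y, M.B (e i x) (e i y) ↔ (P i).B x y
  cD : ∀ i j x y, i ≠ j → (M.D (e i x) (e j y) ↔ cD i j ((P i).U x) ((P j).U y))
  cB : ∀ i j x y, i ≠ j → (M.B (e i x) (e j y) ↔ cB i j ((P i).U x) ((P j).U y))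

open Classical in
/-- Composition lemma: Duplicator combines winning strategies on corresponding pieces into one on the
sums, answering each move inside the piece where it was made. -/
theorem IsSum.bf {ι : Type} {P P' : ι → Str A} {M N : Str A} {e : ∀ i, (P i).C → M.C}
    {e' : ∀ i, (P' i).C → N.C} {cD cB : ι → ι → Prop → Prop → Prop} {cU : ι → Prop → Prop}
    (hM : IsSum P M e cD cB cU) (hN : IsSum P' N e' cD cB cU) {k : ℕ} :
    ∀ {p : ∀ i, Set ((P i).C × (P' i).C)} {r : Set (M.C × N.C)},
    (∀ i, BF (P i) (P' i) k (p i)) →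
    (∀ a ∈ r, ∃ i, ∃ b ∈ p i, a = (e i b.1, e' i b.2)) → BF M N k r := by
  induction k with
  | zero =>
    intro p r hp hr a ha
    obtain ⟨i, b, hb, rfl⟩ := hr a ha
    obtain ⟨l1, u1, c1⟩ := hp i b hb
    refine ⟨by simp only [hM.L, hN.L, l1], by simp only [hM.U, hN.U, u1], ?_⟩
    intro a' ha'
    obtain ⟨j, b', hb', rfl⟩ := hr a' ha'
    by_cases hij : i = j
    · subst hij
      obtain ⟨e1, d1, b1⟩ := c1 b' hb'
      refine ⟨?_, by simp only [hM.D, hN.D, d1], by simp only [hM.B, hN.B, b1]⟩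
      constructor
      · intro h
        exact congrArg (e' i) (e1.1 (hM.inj' _ _ _ h))
      · intro h
        exact congrArg (e i) (e1.2 (hN.inj' _ _ _ h))
    · obtain ⟨-, u2, -⟩ := hp j b' hb'
      refine ⟨⟨fun h => absurd (hM.inj _ _ _ _ h) hij, fun h => absurd (hN.inj _ _ _ _ h) hij⟩,
        ?_, ?_⟩
      · simp only [hM.cD _ _ _ _ hij, hN.cD _ _ _ _ hij, u1, u2]
      · simp only [hM.cB _ _ _ _ hij, hN.cB _ _ _ _ hij, u1, u2]
  | succ k ih =>
    intro p r hp hr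
    have key : ∀ i x y, BF (P i) (P' i) k (insert (x, y) (p i)) →
        BF M N k (insert (e i x, e' i y) r) := by
      intro i x y h
      refine ih (p := Function.update p i (insert (x, y) (p i))) ?_ ?_
      · intro j
        by_cases hj : j = i
        · subst hj; simpa using h
        · simpa [hj] using (hp j).1
      · rintro a (rfl | ha)
        · exact ⟨i, (x, y), by simp, rfl⟩
        · obtain ⟨j, b, hb, rfl⟩ := hr a ha
          refine ⟨j, b, ?_, rfl⟩
          by_cases hj : j = i
          · subst hj; simp [hb]
          · simpa [hj] using hb
    refine ⟨ih (fun i => (hp i).1) hr, fun x => ?_, fun y => ?_⟩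
    · obtain ⟨i, x, rfl⟩ := hM.surj x
      obtain ⟨y, hy⟩ := (hp i).2.1 x
      exact ⟨_, key i x y hy⟩
    · obtain ⟨i, y, rfl⟩ := hN.surj y
      obtain ⟨x, hx⟩ := (hp i).2.2 y
      exact ⟨_, key i x y hx⟩

/-- There are finitely many classes of `k`-round equivalence of structures with `n` named points:
equality of an invariant with finitely many values suffices. -/
theorem exists_inv [Finite A] (k : ℕ) : ∀ n : ℕ, ∃ (I : Type) (_ : Finite I)
    (τ : (M : Str A) → (Fin n → M.C) → I), ∀ M N a b, τ M a = τ N b →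
      BF M N k {q | ∃ i, q = (a i, b i)} := by
  induction k with
  | zero =>
    intro n
    refine ⟨(Fin n → A) × (Fin n → Prop) × (Fin n → Fin n → Prop) × (Fin n → Fin n → Prop) ×
      (Fin n → Fin n → Prop), inferInstance, fun M a => (fun i => M.L (a i), fun i => M.U (a i),
        fun i j => a i = a j, fun i j => M.D (a i) (a j), fun i j => M.B (a i) (a j)), ?_⟩
    intro M N a b h
    simp only [Prod.mk.injEq, funext_iff, eq_iff_iff] at h
    obtain ⟨h1, h2, h3, h4, h5⟩ := h
    rintro _ ⟨i, rfl⟩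
    refine ⟨h1 i, h2 i, ?_⟩
    rintro _ ⟨j, rfl⟩
    exact ⟨h3 i j, h4 i j, h5 i j⟩
  | succ k ih =>
    intro n
    obtain ⟨I, hI, τ, hτ⟩ := ih n
    obtain ⟨J, hJ, σ, hσ⟩ := ih (n + 1)
    refine ⟨I × Set J, inferInstance, fun M a => (τ M a, {j | ∃ x, σ M (Fin.cons x a) = j}), ?_⟩
    intro M N a b h
    simp only [Prod.mk.injEq] at h
    obtain ⟨h1, h2⟩ := h
    have sub : ∀ x y, σ M (Fin.cons x a) = σ N (Fin.cons y b) →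
        BF M N k (insert (x, y) {q | ∃ i, q = (a i, b i)}) := by
      intro x y h
      refine (hσ _ _ _ _ h).mono ?_
      rintro q (rfl | ⟨i, rfl⟩)
      · exact ⟨0, by simp⟩
      · exact ⟨i.succ, by simp⟩
    refine ⟨hτ _ _ _ _ h1, fun x => ?_, fun y => ?_⟩
    · have : σ M (Fin.cons x a) ∈ {j | ∃ y, σ N (Fin.cons y b) = j} := h2 ▸ ⟨x, rfl⟩
      obtain ⟨y, hy⟩ := this
      exact ⟨y, sub x y hy.symm⟩
    · have : σ N (Fin.cons y b) ∈ {j | ∃ x, σ M (Fin.cons x a) = j} := h2 ▸ ⟨y, rfl⟩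
      obtain ⟨x, hx⟩ := this
      exact ⟨x, sub x y hx⟩

/-- A recipe for gluing two structures: the relations from points of the first to points of the second
(index `₁₂`) and back (index `₂₁`), as functions of the marks of the two points. -/
structure Cross where
  D₁₂ : Prop → Prop → Prop
  D₂₁ : Prop → Prop → Prop
  B₁₂ : Prop → Prop → Prop
  B₂₁ : Prop → Prop → Prop

/-- The disjoint union of two structures glued along `χ`; marks are inherited. -/
def Cross.sum (χ : Cross) (M N : Str A) : Str A where
  C := M.C ⊕ N.C
  D
    | .inl x, .inl y => M.D x y
    | .inl x, .inr y => χ.D₁₂ (M.U x) (N.U y)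
    | .inr x, .inl y => χ.D₂₁ (N.U x) (M.U y)
    | .inr x, .inr y => N.D x y
  B
    | .inl x, .inl y => M.B x y
    | .inl x, .inr y => χ.B₁₂ (M.U x) (N.U y)
    | .inr x, .inl y => χ.B₂₁ (N.U x) (M.U y)
    | .inr x, .inr y => N.B x y
  L := Sum.elim M.L N.L
  U := Sum.elim M.U N.U

/-- The structure without points, neutral for every `Cross.sum`. -/
def Str.empty (A : Type) : Str A where
  C := Empty
  D := fun _ _ => False
  B := fun _ _ => False
  L := fun x => x.elim
  U := fun _ => False

/-- A pair of structures as a family indexed by `Bool`, the first one at `false`. -/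
def two (M N : Str A) : Bool → Str A := fun b => bif b then N else M

/-- The `D`-part of `χ` in the form expected by `IsSum`, for families indexed by `Bool`. -/
def Cross.fD (χ : Cross) : Bool → Bool → Prop → Prop → Prop := fun i _ => bif i then χ.D₂₁ else χ.D₁₂

/-- The `B`-part of `χ` in the form expected by `IsSum`, for families indexed by `Bool`. -/
def Cross.fB (χ : Cross) : Bool → Bool → Prop → Prop → Prop := fun i _ => bif i then χ.B₂₁ else χ.B₁₂

/-- The map out of the pieces of `two M N` given by a map out of each. -/
def twoMap {M N K : Str A} (f : M.C → K.C) (g : N.C → K.C) : ∀ i, (two M N i).C → K.C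
  | false => f
  | true => g

theorem Cross.isSum (χ : Cross) (M N : Str A) :
    IsSum (two M N) (χ.sum M N) (twoMap Sum.inl Sum.inr) χ.fD χ.fB (fun _ => id) where
  surj := by
    rintro (x | x)
    · exact ⟨false, x, rfl⟩
    · exact ⟨true, x, rfl⟩
  inj := by
    rintro (_ | _) (_ | _) x y h <;> simp_all [twoMap]
  inj' := by
    rintro (_ | _) x y h
    · exact Sum.inl_injective h
    · exact Sum.inr_injective h
  L := by rintro (_ | _) x <;> rfl
  U := by rintro (_ | _) x <;> rfl
  D := by rintro (_ | _) x y <;> rfl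
  B := by rintro (_ | _) x y <;> rfl
  cD := by rintro (_ | _) (_ | _) x y h <;> first | rfl | simp at h
  cB := by rintro (_ | _) (_ | _) x y h <;> first | rfl | simp at h

theorem Cross.sum_bf (χ : Cross) {M N M' N' : Str A} {k : ℕ} {p : Set (M.C × M'.C)}
    {q : Set (N.C × N'.C)} (hp : BF M M' k p) (hq : BF N N' k q) :
    BF (χ.sum M N) (χ.sum M' N') k
      {a | (∃ b ∈ p, a = (.inl b.1, .inl b.2)) ∨ ∃ b ∈ q, a = (.inr b.1, .inr b.2)} := by
  refine (χ.isSum M N).bf (χ.isSum M' N')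
    (p := fun i => match i with | false => p | true => q) ?_ ?_
  · rintro (_ | _)
    · exact hp
    · exact hq
  · rintro a (⟨b, hb, rfl⟩ | ⟨b, hb, rfl⟩)
    · exact ⟨false, b, hb, rfl⟩
    · exact ⟨true, b, hb, rfl⟩

theorem Cross.assocIso (χ : Cross) (M N K : Str A) :
    StrIso (χ.sum (χ.sum M N) K) (χ.sum M (χ.sum N K)) (Equiv.sumAssoc M.C N.C K.C) where
  L := by rintro ((x | x) | x) <;> rfl
  U := by rintro ((x | x) | x) <;> rfl
  D := by rintro ((x | x) | x) ((y | y) | y) <;> rfl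
  B := by rintro ((x | x) | x) ((y | y) | y) <;> rfl

theorem Cross.emptyIso (χ : Cross) (M : Str A) :
    StrIso (χ.sum (Str.empty A) M) M (Equiv.emptySum Empty M.C) where
  L := by rintro (x | x); exact x.elim; rfl
  U := by rintro (x | x); exact x.elim; rfl
  D := by rintro (x | x) (y | y) <;> first | exact x.elim | exact y.elim | rfl
  B := by rintro (x | x) (y | y) <;> first | exact x.elim | exact y.elim | rfl

theorem Cross.isoEmpty (χ : Cross) (M : Str A) :
    StrIso (χ.sum M (Str.empty A)) M (Equiv.sumEmpty M.C Empty) where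
  L := by rintro (x | x); rfl; exact x.elim
  U := by rintro (x | x); rfl; exact x.elim
  D := by rintro (x | x) (y | y) <;> first | exact x.elim | exact y.elim | rfl
  B := by rintro (x | x) (y | y) <;> first | exact x.elim | exact y.elim | rfl

/-- Indistinguishability of structures in the `k`-round game from the empty position. -/
def kSetoid (A : Type) (k : ℕ) : Setoid (Str A) where
  r M N := BF M N k ∅
  iseqv := ⟨fun M => (BF.refl M k).mono (Set.empty_subset _), fun h => h.symm.mono (by simp),
    fun h h' => h.trans h' (by simp)⟩

/-- The `k`-types, that is, classes of structures under `k`-round indistinguishability. The parameter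
`χ` does not change the set; it selects the gluing that is used as multiplication. -/
def KType (A : Type) (k : ℕ) (_ : Cross) : Type 1 := Quotient (kSetoid A k)

/-- The `k`-type of a structure. -/
def Str.type (k : ℕ) (χ : Cross) (M : Str A) : KType A k χ := Quotient.mk (kSetoid A k) M

theorem Str.type_eq {k : ℕ} {χ : Cross} {M N : Str A} :
    M.type k χ = N.type k χ ↔ BF M N k ∅ :=
  ⟨fun h => Quotient.exact (s := kSetoid A k) h, fun h => Quotient.sound (s := kSetoid A k) h⟩

theorem StrIso.type {M N : Str A} {e : M.C ≃ N.C} (h : StrIso M N e) (k : ℕ) (χ : Cross) :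
    M.type k χ = N.type k χ :=
  Str.type_eq.2 ((h.bf k).mono (Set.empty_subset _))

instance (k : ℕ) (χ : Cross) [Finite A] : Finite (KType A k χ) := by
  obtain ⟨I, hI, τ, hτ⟩ := exists_inv (A := A) k 0
  refine Finite.of_injective (fun q : KType A k χ => τ (Quotient.out q) Fin.elim0) ?_
  intro q q' h
  have := hτ _ _ _ _ h
  rw [← Quotient.out_eq q, ← Quotient.out_eq q']
  exact Quotient.sound (this.mono (Set.empty_subset _))

/-- Gluing along `χ` is compatible with `k`-types, by the composition lemma. -/
instance (k : ℕ) (χ : Cross) : Monoid (KType A k χ) where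
  mul := Quotient.map₂ χ.sum (fun _ _ h _ _ h' => (χ.sum_bf h h').mono (Set.empty_subset _))
  one := Quotient.mk _ (Str.empty A)
  mul_assoc := by
    rintro ⟨M⟩ ⟨N⟩ ⟨K⟩
    exact (χ.assocIso M N K).type k χ
  one_mul := by
    rintro ⟨M⟩
    exact (χ.emptyIso M).type k χ
  mul_one := by
    rintro ⟨M⟩
    exact (χ.isoEmpty M).type k χ

theorem Cross.type_sum (χ : Cross) (k : ℕ) (M N : Str A) :
    (χ.sum M N).type k χ = M.type k χ * N.type k χ := rfl

theorem type_empty (k : ℕ) (χ : Cross) : (Str.empty A).type k χ = 1 := rfl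

/-- The `n`-fold gluing of a structure with itself along `χ`. -/
def Cross.npow (χ : Cross) (M : Str A) : ℕ → Str A
  | 0 => Str.empty A
  | n + 1 => χ.sum M (χ.npow M n)

theorem Cross.type_npow (χ : Cross) (k : ℕ) (M : Str A) (n : ℕ) :
    (χ.npow M n).type k χ = M.type k χ ^ n := by
  induction n with
  | zero => rfl
  | succ n ih => rw [pow_succ', ← ih]; rfl

theorem StrIso.trans {M N K : Str A} {e : M.C ≃ N.C} {e' : N.C ≃ K.C} (h : StrIso M N e)
    (h' : StrIso N K e') : StrIso M K (e.trans e') :=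
  ⟨fun x => by simp [h.L, h'.L], fun x => by simp [h.U, h'.U], fun x y => by simp [h.D, h'.D],
    fun x y => by simp [h.B, h'.B]⟩

theorem StrIso.symm {M N : Str A} {e : M.C ≃ N.C} (h : StrIso M N e) : StrIso N M e.symm :=
  ⟨fun x => by simp [← h.L], fun x => by simp [← h.U], fun x y => by simp [← h.D],
    fun x y => by simp [← h.B]⟩

theorem Cross.sumIso (χ : Cross) {M N N' : Str A} {e : N.C ≃ N'.C} (h : StrIso N N' e) :
    StrIso (χ.sum M N) (χ.sum M N') (Equiv.sumCongr (Equiv.refl _) e) where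
  L := by rintro (x | x); rfl; exact h.L x
  U := by rintro (x | x); rfl; exact h.U x
  D := by
    rintro (x | x) (y | y)
    · rfl
    · exact iff_of_eq (congrArg (χ.D₁₂ (M.U x)) (propext (h.U y)))
    · exact iff_of_eq (congrArg (χ.D₂₁ · (M.U y)) (propext (h.U x)))
    · exact h.D x y
  B := by
    rintro (x | x) (y | y)
    · rfl
    · exact iff_of_eq (congrArg (χ.B₁₂ (M.U x)) (propext (h.U y)))
    · exact iff_of_eq (congrArg (χ.B₂₁ · (M.U y)) (propext (h.U x)))
    · exact h.B x y

/-- Every point of an `n`-fold gluing lies in one copy, with `i` copies before and `j` after it. -/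
theorem Cross.npow_split (χ : Cross) (M : Str A) : ∀ (n : ℕ) (a : (χ.npow M n).C),
    ∃ (i j : ℕ) (a' : M.C) (e : (χ.npow M n).C ≃ (χ.sum (χ.npow M i) (χ.sum M (χ.npow M j))).C),
      i + 1 + j = n ∧ StrIso _ _ e ∧ e a = .inr (.inl a') := by
  intro n
  induction n with
  | zero => exact fun a => a.elim
  | succ n ih =>
    rintro (a | a)
    · exact ⟨0, n, a, _, by omega, (χ.emptyIso (χ.sum M (χ.npow M n))).symm, rfl⟩
    · obtain ⟨i, j, a', e, hij, he, ha⟩ := ih a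
      refine ⟨i + 1, j, a', _, by omega, (χ.sumIso he).trans (χ.assocIso M _ _).symm, ?_⟩
      change (Equiv.sumAssoc _ _ _).symm (Sum.inr (e a)) = _
      rw [ha]; rfl

/-- The number `2 ^ k - 1` of copies from which on `k` rounds no longer count copies; see
`Cross.npow_bf`. -/
def thr : ℕ → ℕ
  | 0 => 0
  | k + 1 => 2 * thr k + 1

theorem Cross.npow_cast (χ : Cross) (M : Str A) {m i j : ℕ} (h : i + 1 + j = m) :
    ∃ (e : (χ.npow M m).C ≃ (χ.sum (χ.npow M i) (χ.sum M (χ.npow M j))).C), StrIso _ _ e := by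
  subst h
  induction i with
  | zero => 
    rw [Nat.zero_add, Nat.add_comm]
    exact ⟨_, (χ.emptyIso (χ.sum M (χ.npow M j))).symm⟩
  | succ i ih => 
    obtain ⟨e, he⟩ := ih
    rw [show i + 1 + 1 + j = (i + 1 + j) + 1 by omega]
    exact ⟨_, (χ.sumIso he).trans (χ.assocIso M _ _).symm⟩

/-- Duplicator answers a move in some copy so that the number of copies on either side is either the
same or at least `thr k` in both structures. -/
theorem Cross.npow_bf (χ : Cross) (M : Str A) (k : ℕ) : ∀ n m : ℕ,
    (n = m ∨ (thr k ≤ n ∧ thr k ≤ m)) → BF (χ.npow M n) (χ.npow M m) k ∅ := by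
  induction k with
  | zero => intro n m _ a ha; exact ha.elim
  | succ k ih =>
    have forth : ∀ n m : ℕ, (n = m ∨ (thr (k + 1) ≤ n ∧ thr (k + 1) ≤ m)) →
        ∀ x, ∃ y, BF (χ.npow M n) (χ.npow M m) k {(x, y)} := by
      intro n m h x
      obtain ⟨i, j, a, e, hij, he, hx⟩ := χ.npow_split M n x
      have : ∃ i' j', i' + 1 + j' = m ∧ (i = i' ∨ (thr k ≤ i ∧ thr k ≤ i')) ∧
          (j = j' ∨ (thr k ≤ j ∧ thr k ≤ j')) := by
        rcases h with rfl | ⟨h1, h2⟩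
        · exact ⟨i, j, hij, Or.inl rfl, Or.inl rfl⟩
        · simp only [thr] at h1 h2
          by_cases hi : i < thr k
          · exact ⟨i, m - 1 - i, by omega, Or.inl rfl, by omega⟩
          · by_cases hj : j < thr k
            · exact ⟨m - 1 - j, j, by omega, by omega, Or.inl rfl⟩
            · exact ⟨thr k, m - 1 - thr k, by omega, by omega, by omega⟩
      obtain ⟨i', j', hij', hi, hj⟩ := this
      obtain ⟨e', he'⟩ := χ.npow_cast M hij'
      refine ⟨e'.symm (.inr (.inl a)), ?_⟩
      have h1 := χ.sum_bf (ih _ _ hi) (χ.sum_bf (BF.refl M k) (ih _ _ hj))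
      refine (he.bf k).trans (h1.trans (he'.symm.bf k)
        (r := {(.inr (.inl a), e'.symm (.inr (.inl a)))}) ?_) ?_
      · rintro _ rfl
        exact ⟨.inr (.inl a), Or.inr ⟨_, Or.inl ⟨(a, a), rfl, rfl⟩, rfl⟩, rfl⟩
      · rintro _ rfl
        exact ⟨.inr (.inl a), hx.symm, rfl⟩
    intro n m h
    refine ⟨ih n m ?_, fun x => ?_, fun y => ?_⟩
    · simp only [thr] at h; omega
    · obtain ⟨y, hy⟩ := forth n m h x
      exact ⟨y, by simpa using hy⟩
    · obtain ⟨x, hx⟩ := forth m n (by omega) y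
      exact ⟨x, hx.symm.mono (by rintro _ (rfl | h); rfl; exact h.elim)⟩

/-- The monoids of `k`-types are aperiodic. Hence first-order logic cannot count modulo `n`. -/
theorem KType.aperiodic (k : ℕ) (χ : Cross) : ∃ n, ∀ x : KType A k χ, x ^ (n + 1) = x ^ n := by
  refine ⟨thr k, ?_⟩
  rintro ⟨M⟩
  have := χ.npow_bf M k (thr k + 1) (thr k) (by omega)
  rw [← Str.type_eq (χ := χ), χ.type_npow, χ.type_npow] at this
  exact this

/-! ### Local divisors of finite aperiodic monoids -/

/-- The local divisor of `M` at `c`: the set `Mc ∩ cM`, with the product `(u c) ∘ (c v) = u c v` and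
unit `c`. -/
def LocalDiv {M : Type*} [Monoid M] (c : M) : Type _ :=
  {x : M // (∃ u, x = u * c) ∧ ∃ v, x = c * v}

namespace LocalDiv
variable {M : Type*} [Monoid M] {c : M}

/-- The product does not depend on the chosen `u` with `x = u c`, since `y` is a right multiple of `c`. -/
noncomputable instance : Monoid (LocalDiv c) :=
  have wd : ∀ (x y : LocalDiv c) (u : M), x.1 = u * c → x.2.1.choose * y.1 = u * y.1 := by
    rintro x ⟨_, _, v, rfl⟩ u hu
    simp only [← mul_assoc]
    rw [← hu, ← x.2.1.choose_spec]
  { mul := fun x y => ⟨x.2.1.choose * y.1, by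
      refine ⟨?_, ?_⟩
      · obtain ⟨u, hu⟩ := y.2.1
        exact ⟨x.2.1.choose * u, by rw [hu, mul_assoc]⟩
      · obtain ⟨v, hv⟩ := y.2.2
        obtain ⟨w, hw⟩ := x.2.2
        refine ⟨w * v, ?_⟩
        rw [hv, ← mul_assoc, ← mul_assoc, ← x.2.1.choose_spec, hw]⟩
    one := ⟨c, ⟨1, by simp⟩, ⟨1, by simp⟩⟩
    mul_assoc := by
      intro x y z
      refine Subtype.ext ?_
      refine (wd _ z (x.2.1.choose * y.2.1.choose) ?_).trans (mul_assoc _ _ _)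
      change x.2.1.choose * y.1 = _
      rw [mul_assoc, ← y.2.1.choose_spec]
    one_mul := by
      intro x
      exact Subtype.ext ((wd _ x 1 (one_mul c).symm).trans (one_mul _))
    mul_one := by
      intro x
      exact Subtype.ext x.2.1.choose_spec.symm }

theorem val_one : (1 : LocalDiv c).1 = c := rfl

theorem val_mul (x y : LocalDiv c) (u : M) (hu : x.1 = u * c) : (x * y).1 = u * y.1 := by
  change x.2.1.choose * y.1 = _
  obtain ⟨v, hv⟩ := y.2.2
  rw [hv, ← mul_assoc, ← mul_assoc, ← hu, ← x.2.1.choose_spec]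

theorem val_pow (x : LocalDiv c) (u : M) (hu : x.1 = u * c) (n : ℕ) : (x ^ n).1 = u ^ n * c := by
  induction n with
  | zero => simp [val_one]
  | succ n ih => rw [pow_succ', val_mul x _ u hu, ih, pow_succ', mul_assoc]

theorem aperiodic {n : ℕ} (h : ∀ x : M, x ^ (n + 1) = x ^ n) (x : LocalDiv c) :
    x ^ (n + 1) = x ^ n := by
  obtain ⟨u, hu⟩ := x.2.1
  exact Subtype.ext (by rw [val_pow x u hu, val_pow x u hu, h])

instance [Finite M] : Finite (LocalDiv c) := Subtype.finite

/-- In a finite aperiodic monoid `1` is the only right-invertible element, so the local divisor at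
`c ≠ 1` misses `1`. This makes induction on the size of the monoid possible. -/
theorem card_lt [Finite M] {n : ℕ} (h : ∀ x : M, x ^ (n + 1) = x ^ n) (hc : c ≠ 1) :
    Nat.card (LocalDiv c) < Nat.card M := by
  have : ∀ u : M, c * u ≠ 1 := by
    intro u hu
    have hn : ∀ m, c ^ m * u ^ m = 1 := by
      intro m
      induction m with
      | zero => simp
      | succ m ih => rw [pow_succ, pow_succ', mul_assoc, ← mul_assoc c, hu, one_mul, ih]
    apply hc
    have h1 := congrArg (· * u ^ n) (h c)
    simpa only [hn, pow_succ', mul_assoc, mul_one] using h1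
  refine Finite.card_subtype_lt (x := 1) ?_
  rintro ⟨-, v, hv⟩
  exact this v hv.symm

end LocalDiv

/-! ### Definability in Conditional XPath -/

/-- A tree with a distinguished node. Definability is studied over all trees at once. -/
@[ext] structure Pt (A : Type) where
  T : UTree A
  s : Node
  mem : s ∈ T.dom

/-- A step of Conditional XPath, as a relation between pointed trees over the same tree. -/
def stepR (st : XStep) (x y : Pt A) : Prop := x.T = y.T ∧ st.rel x.T x.s y.s

/-- The property `P` is defined by a node formula. -/
def DefN (P : Pt A → Prop) : Prop := ∃ α : CXNode A, ∀ x : Pt A, P x ↔ α.Sat x.T x.s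

/-- The relations defined by path formulas, presented semantically: the closure of tests, steps and
conditional transitive closures of steps under composition and union. See `PD.formula`. -/
inductive PD : (Pt A → Pt A → Prop) → Prop
  | test (P : Pt A → Prop) : DefN P → PD (fun x y => x = y ∧ P x)
  | step (st : XStep) : PD (stepR st)
  | plus (st : XStep) (P : Pt A → Prop) : DefN P →
      PD (TransGen fun x y => stepR st x y ∧ P y)
  | comp (R R' : Pt A → Pt A → Prop) : PD R → PD R' → PD (fun x z => ∃ y, R x y ∧ R' y z)
  | or (R R' : Pt A → Pt A → Prop) : PD R → PD R' → PD (fun x y => R x y ∨ R' x y)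

theorem DefN.congr {P Q : Pt A → Prop} (h : DefN P) (hPQ : ∀ x, Q x ↔ P x) : DefN Q := by
  obtain ⟨α, hα⟩ := h
  exact ⟨α, fun x => (hPQ x).trans (hα x)⟩

theorem PD.congr {P Q : Pt A → Pt A → Prop} (h : PD P) (hPQ : ∀ x y, Q x y ↔ P x y) : PD Q := by
  obtain rfl : Q = P := by
    funext x y
    exact propext (hPQ x y)
  exact h

theorem DefN.not {P : Pt A → Prop} (h : DefN P) : DefN (fun x => ¬ P x) := by
  obtain ⟨α, hα⟩ := h
  exact ⟨.not α, fun x => by simp only [hα, CXNode.Sat]⟩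

theorem DefN.or {P Q : Pt A → Prop} (h : DefN P) (h' : DefN Q) : DefN (fun x => P x ∨ Q x) := by
  obtain ⟨α, hα⟩ := h
  obtain ⟨β, hβ⟩ := h'
  exact ⟨.or α β, fun x => by simp only [hα, hβ, CXNode.Sat]⟩

theorem DefN.and {P Q : Pt A → Prop} (h : DefN P) (h' : DefN Q) : DefN (fun x => P x ∧ Q x) :=
  (h.not.or h'.not).not.congr (fun x => by tauto)

theorem DefN.const (p : Prop) : DefN (fun _ : Pt A => p) := by
  have hT : DefN (fun _ : Pt A => True) := by
    refine ⟨.or (.E (.step .ch)) (.not (.E (.step .ch))), fun x => ?_⟩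
    rw [CXNode.Sat, CXNode.Sat]
    tauto
  by_cases h : p
  · exact hT.congr (by simp [h])
  · exact hT.not.congr (by simp [h])

theorem DefN.exists {ι : Type*} [Finite ι] {P : ι → Pt A → Prop} (h : ∀ i, DefN (P i)) :
    DefN (fun x => ∃ i, P i x) := by
  have : ∀ S : Set ι, S.Finite → DefN (fun x => ∃ i ∈ S, P i x) := by
    intro S hS
    induction S, hS using Set.Finite.induction_on with
    | empty => exact (DefN.const False).congr (by simp)
    | @insert i _ _ _ ih => exact ((h i).or ih).congr (by simp)
  exact (this Set.univ Set.finite_univ).congr (by simp)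

theorem DefN.forall {ι : Type*} [Finite ι] {P : ι → Pt A → Prop} (h : ∀ i, DefN (P i)) :
    DefN (fun x => ∀ i, P i x) :=
  (DefN.exists fun i => (h i).not).not.congr (by simp)

theorem DefN.label (a : A) : DefN (fun x : Pt A => x.T.label x.s = a) :=
  ⟨.lab a, fun x => by rw [CXNode.Sat]; simp [x.mem]⟩

/-- A property that depends only on the truth values of finitely many definable properties is definable,
as their Boolean combination. -/
theorem DefN.of_inv {ι : Type*} [Finite ι] {E : ι → Pt A → Prop} (h : ∀ i, DefN (E i))
    {P : Pt A → Prop} (hP : ∀ x y, (∀ i, E i x ↔ E i y) → P x → P y) : DefN P := by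
  have h1 : ∀ Z : Set ι, DefN (fun x => ∀ i, (E i x ↔ i ∈ Z)) := by
    intro Z
    refine DefN.forall fun i => ?_
    by_cases hi : i ∈ Z
    · exact (h i).congr (by simp [hi])
    · exact (h i).not.congr (by simp [hi])
  have h2 : DefN (fun x => ∃ Z : Set ι, (∀ i, (E i x ↔ i ∈ Z)) ∧ ∃ y, P y ∧ ∀ i, E i y ↔ i ∈ Z) :=
    DefN.exists fun Z => (h1 Z).and (DefN.const _)
  refine h2.congr fun x => ⟨fun hx => ⟨{i | E i x}, fun i => Iff.rfl, x, hx, fun i => Iff.rfl⟩, ?_⟩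
  rintro ⟨Z, hx, y, hy, hyZ⟩
  exact hP y x (fun i => (hyZ i).trans (hx i).symm) hy

/-- Every fibre of `g` is definable by a node formula. Used for functions with finitely many values. -/
def DefF {ι : Type*} (g : Pt A → ι) : Prop := ∀ i, DefN (fun x => g x = i)

theorem DefF.prod {ι κ : Type*} {g : Pt A → ι} {g' : Pt A → κ} (h : DefF g) (h' : DefF g') :
    DefF (fun x => (g x, g' x)) := by
  rintro ⟨i, j⟩
  exact ((h i).and (h' j)).congr (by simp)

theorem DefF.of_inv {ι κ : Type*} [Finite ι] {g : Pt A → ι} (h : DefF g) {f : Pt A → κ}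
    (hf : ∀ x y, g x = g y → f x = f y) : DefF f := by
  intro c
  refine DefN.of_inv h (fun x y hxy hx => ?_)
  rw [← hf x y ((hxy (g x)).1 rfl).symm]
  exact hx

/-- The chains in the semantics of `(step/?α)⁺`, expressed as a transitive closure. -/
theorem chain_iff {α : Type*} (r : α → α → Prop) (P : α → Prop) (s t : α) :
    (∃ p : List α, p ≠ [] ∧ List.Chain' r (s :: p) ∧
      (s :: p).getLast (List.cons_ne_nil _ _) = t ∧ ∀ u ∈ p, P u) ↔
    TransGen (fun a b => r a b ∧ P b) s t := by
  constructor
  · rintro ⟨p, hp, hc, hl, hP⟩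
    induction p generalizing s with
    | nil => exact absurd rfl hp
    | cons u p ih =>
      have h1 : r s u ∧ P u := ⟨List.IsChain.rel hc, hP u (by simp)⟩
      rcases p with _ | ⟨w, p⟩
      · simp at hl
        subst hl
        exact TransGen.single h1
      · exact TransGen.head h1 (ih u (by simp) (List.IsChain.tail hc) (by simpa using hl)
          (fun u hu => hP u (by simp_all)))
  · intro h
    induction h using TransGen.head_induction_on with
    | @single a h => exact ⟨[t], by simp, by simpa [List.Chain'] using h.1, by simp, by simpa using h.2⟩
    | @head a b h _ ih =>
      obtain ⟨p, hp, hc, hl, hP⟩ := ih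
      refine ⟨b :: p, by simp, List.IsChain.cons_cons h.1 hc, by simpa using hl, ?_⟩
      intro u hu
      rcases List.mem_cons.1 hu with rfl | hu
      · exact h.2
      · exact hP u hu

theorem XStep.rel_dom {T : UTree A} {st : XStep} {s t : Node} (h : st.rel T s t) :
    s ∈ T.dom ∧ t ∈ T.dom := by
  cases st
  · exact ⟨h.1, h.2.1⟩
  · exact ⟨h.2.1, h.1⟩
  · exact ⟨h.1, h.2.1⟩
  · exact ⟨h.2.1, h.1⟩

/-- Relations in `PD` come from path formulas. The second clause says that a path never leaves the tree
domain. -/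
theorem PD.formula {R : Pt A → Pt A → Prop} (h : PD R) : ∃ β : CXPath A,
    (∀ x y : Pt A, R x y ↔ x.T = y.T ∧ β.Sat x.T x.s y.s) ∧
    ∀ (T : UTree A) s t, s ∈ T.dom → β.Sat T s t → t ∈ T.dom := by
  induction h with
  | test P hP =>
    obtain ⟨α, hα⟩ := hP
    refine ⟨.test α, fun x y => ?_, fun T s t hs h => ?_⟩
    · simp only [CXPath.Sat, Pt.ext_iff, hα, and_assoc]
    · rw [CXPath.Sat] at h
      exact h.1 ▸ hs
  | step st =>
    refine ⟨.step st, fun x y => ?_, fun T s t hs h => ?_⟩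
    · rw [CXPath.Sat, stepR]
    · rw [CXPath.Sat] at h
      exact (XStep.rel_dom h).2
  | plus st P hP =>
    obtain ⟨α, hα⟩ := hP
    have hdom : ∀ (T : UTree A) s t, s ∈ T.dom →
        TransGen (fun a b => st.rel T a b ∧ CXNode.Sat T b α) s t → t ∈ T.dom := by
      intro T s t hs h
      induction h with
      | single h => exact (XStep.rel_dom h.1).2
      | tail _ h _ => exact (XStep.rel_dom h.1).2
    refine ⟨.until st α, fun x y => ?_, fun T s t hs h => ?_⟩
    · rw [CXPath.Sat, chain_iff]
      constructor
      · intro h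
        induction h with
        | single h => exact ⟨h.1.1, TransGen.single ⟨h.1.2, by rw [h.1.1, ← hα]; exact h.2⟩⟩
        | tail _ h ih =>
          refine ⟨ih.1.trans h.1.1, ih.2.tail ⟨by rw [ih.1]; exact h.1.2, ?_⟩⟩
          rw [ih.1, h.1.1, ← hα]
          exact h.2
      · rintro ⟨hT, h⟩
        obtain ⟨T, s, hs⟩ := x
        obtain ⟨T', t, ht⟩ := y
        obtain rfl : T = T' := hT
        simp only at h
        induction h with
        | single h => exact TransGen.single ⟨⟨rfl, h.1⟩, (hα _).2 h.2⟩
        | tail h1 h ih =>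
          have := hdom _ _ _ hs h1
          exact (ih this).tail ⟨⟨rfl, h.1⟩, (hα _).2 h.2⟩
    · rw [CXPath.Sat, chain_iff] at h
      exact hdom T s t hs h
  | comp R R' _ _ ih ih' =>
    obtain ⟨β, hβ, dβ⟩ := ih
    obtain ⟨γ, hγ, dγ⟩ := ih'
    refine ⟨.comp β γ, fun x y => ?_, fun T s t hs h => ?_⟩
    · rw [CXPath.Sat]
      constructor
      · rintro ⟨z, h1, h2⟩
        rw [hβ] at h1
        rw [hγ] at h2
        exact ⟨h1.1.trans h2.1, z.s, h1.2, by rw [h1.1]; exact h2.2⟩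
      · rintro ⟨hT, u, h1, h2⟩
        refine ⟨⟨x.T, u, dβ _ _ _ x.mem h1⟩, (hβ _ _).2 ⟨rfl, h1⟩, (hγ _ _).2 ⟨hT, h2⟩⟩
    · rw [CXPath.Sat] at h
      obtain ⟨u, h1, h2⟩ := h
      exact dγ _ _ _ (dβ _ _ _ hs h1) h2
  | or R R' _ _ ih ih' =>
    obtain ⟨β, hβ, dβ⟩ := ih
    obtain ⟨γ, hγ, dγ⟩ := ih'
    refine ⟨.or β γ, fun x y => ?_, fun T s t hs h => ?_⟩
    · simp only [CXPath.Sat, hβ, hγ]; tauto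
    · rw [CXPath.Sat] at h
      exact h.elim (dβ _ _ _ hs) (dγ _ _ _ hs)

theorem PD.ex {R : Pt A → Pt A → Prop} (h : PD R) : DefN (fun x => ∃ y, R x y) := by
  obtain ⟨β, hβ, dβ⟩ := h.formula
  refine ⟨.E β, fun x => ?_⟩
  rw [CXNode.Sat]
  constructor
  · rintro ⟨y, hy⟩
    exact ⟨y.s, ((hβ _ _).1 hy).2⟩
  · rintro ⟨t, ht⟩
    exact ⟨⟨x.T, t, dβ _ _ _ x.mem ht⟩, (hβ _ _).2 ⟨rfl, ht⟩⟩

theorem PD.restrict {R : Pt A → Pt A → Prop} (h : PD R) {P Q : Pt A → Prop} (hP : DefN P)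
    (hQ : DefN Q) : PD (fun x y => P x ∧ R x y ∧ Q y) := by
  refine ((PD.test P hP).comp _ _ (h.comp _ _ (PD.test Q hQ))).congr fun x y => ?_
  constructor
  · rintro ⟨h1, h2, h3⟩
    exact ⟨x, ⟨rfl, h1⟩, y, h2, rfl, h3⟩
  · rintro ⟨_, ⟨rfl, h1⟩, _, h2, rfl, h3⟩
    exact ⟨h1, h2, h3⟩

theorem PD.bot : PD (fun _ _ : Pt A => False) :=
  (PD.test _ (DefN.const False)).congr (by simp)

theorem PD.exists {ι : Type*} [Finite ι] {P : ι → Pt A → Pt A → Prop} (h : ∀ i, PD (P i)) :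
    PD (fun x y => ∃ i, P i x y) := by
  have : ∀ S : Set ι, S.Finite → PD (fun x y => ∃ i ∈ S, P i x y) := by
    intro S hS
    induction S, hS using Set.Finite.induction_on with
    | empty => exact PD.bot.congr (by simp)
    | @insert i _ _ _ ih => exact ((h i).or _ _ ih).congr (by simp)
  exact (this Set.univ Set.finite_univ).congr (by simp)

theorem PD.guard {R : Pt A → Pt A → Prop} (h : PD R) (p : Prop) : PD (fun x y => p ∧ R x y) :=
  (h.restrict (DefN.const p) (DefN.const True)).congr (by simp)

/-- The converse step. -/
def XStep.inv : XStep → XStep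
  | .ch => .chI
  | .chI => .ch
  | .ns => .nsI
  | .nsI => .ns

theorem stepR_inv (st : XStep) (x y : Pt A) : stepR st.inv x y ↔ stepR st y x := by
  constructor
  · rintro ⟨h1, h2⟩
    refine ⟨h1.symm, ?_⟩
    rw [← h1]
    cases st <;> exact h2
  · rintro ⟨h1, h2⟩
    refine ⟨h1.symm, ?_⟩
    rw [← h1]
    cases st <;> exact h2

/-- Definable relations are closed under converse. For the conditional transitive closure of a step, the
condition moves from the end of each step to its beginning, which shifts it by one node. -/
theorem PD.conv {R : Pt A → Pt A → Prop} (h : PD R) : PD (fun x y => R y x) := by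
  induction h with
  | test P hP => exact (PD.test P hP).congr (fun x y => by constructor <;> (rintro ⟨rfl, h⟩; exact ⟨rfl, h⟩))
  | step st => exact (PD.step st.inv).congr fun x y => (stepR_inv st x y).symm
  | plus st P hP =>
    have h1 := ((PD.plus st.inv P hP).or _ _ (PD.test P hP))
    have h2 := (h1.comp _ _ (PD.step st.inv)).restrict hP (DefN.const True)
    refine h2.congr fun x y => ?_
    simp only [stepR_inv]
    constructor
    · intro h
      induction h with
      | single h => exact ⟨h.2, ⟨_, Or.inr ⟨rfl, h.2⟩, h.1⟩, trivial⟩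
      | tail _ h ih =>
        obtain ⟨h1, ⟨z, h2, h3⟩, -⟩ := ih
        refine ⟨h.2, ⟨z, Or.inl ?_, h3⟩, trivial⟩
        rcases h2 with h2 | ⟨rfl, h2⟩
        · exact TransGen.head ⟨h.1, h1⟩ h2
        · exact TransGen.single ⟨h.1, h2⟩
    · rintro ⟨h1, ⟨z, h2, h3⟩, -⟩
      rcases h2 with h2 | ⟨rfl, h2⟩
      · induction h2 using TransGen.head_induction_on with
        | single h => exact TransGen.tail (TransGen.single ⟨h3, h.2⟩) ⟨h.1, h1⟩
        | head h _ ih => exact TransGen.tail (ih h.2) ⟨h.1, h1⟩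
      · exact TransGen.single ⟨h3, h2⟩
  | comp R R' _ _ ih ih' =>
    exact (ih'.comp _ _ ih).congr fun x y => by simp only [and_comm]
  | or R R' _ _ ih ih' => exact ih.or _ _ ih'

/-! ### Products along deterministic steps -/

/-- `PP S f m x y`: some `S`-path leads from `x` to `y`, and the product of the values of `f` along it, in
order, with `x` included and `y` excluded, is `m`. -/
inductive PP {M : Type*} [Monoid M] (S : Pt A → Pt A → Prop) (f : Pt A → M) : M → Pt A → Pt A → Prop
  | nil (x) : PP S f 1 x x
  | cons {m x y z} : S x y → PP S f m y z → PP S f (f x * m) x z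

theorem PP.append {M : Type*} [Monoid M] {S : Pt A → Pt A → Prop} {f : Pt A → M} {p q : M}
    {x y z : Pt A} (h : PP S f p x y) (h' : PP S f q y z) : PP S f (p * q) x z := by
  induction h with
  | nil => rwa [one_mul]
  | cons h _ ih => rw [mul_assoc]; exact .cons h (ih h')

theorem PP.mono {M : Type*} [Monoid M] {S S' : Pt A → Pt A → Prop} {f : Pt A → M} {p : M}
    {x y : Pt A} (h : PP S f p x y) (hS : ∀ x y, S x y → S' x y) : PP S' f p x y := by
  induction h with
  | nil => exact .nil _
  | cons h _ ih => exact .cons (hS _ _ h) ih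

theorem PP.single {M : Type*} [Monoid M] {S : Pt A → Pt A → Prop} {f : Pt A → M}
    {x y : Pt A} (h : S x y) : PP S f (f x) x y := by
  simpa using PP.cons (f := f) h (.nil y)

/-- A deterministic step that is definable by a path formula and has definable conditional transitive
closures. Besides the basic deterministic steps, this covers the derived steps `offStep` and `jump`. -/
structure Good (S : Pt A → Pt A → Prop) : Prop where
  det : ∀ x y z, S x y → S x z → y = z
  pd : PD S
  plus : ∀ P, DefN P → PD (TransGen fun x y => S x y ∧ P y)

section
variable {M : Type*} [Monoid M] (S : Pt A → Pt A → Prop) (f : Pt A → M) (c : M)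

/-- The step `S`, restricted to points whose letter is not `c`. -/
def offStep (x y : Pt A) : Prop := f x ≠ c ∧ S x y

/-- From an occurrence of the letter `c` to the next one. -/
def jump (x y : Pt A) : Prop := f x = c ∧ f y = c ∧ ∃ z, S x z ∧ ∃ p, PP (offStep S f c) f p z y

/-- The point `x` carries the letter `c`, and the product strictly between it and the next `c` is `p`. -/
def seg (p : M) (x : Pt A) : Prop := f x = c ∧ ∃ z, S x z ∧ ∃ y, PP (offStep S f c) f p z y ∧ f y = c

variable {S f c}

theorem off_unique (hS : Good S) {p p' : M} {z y y' : Pt A} (h : PP (offStep S f c) f p z y)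
    (hy : f y = c) (h' : PP (offStep S f c) f p' z y') (hy' : f y' = c) : p = p' ∧ y = y' := by
  induction h generalizing p' with
  | nil =>
    cases h' with
    | nil => exact ⟨rfl, rfl⟩
    | cons h _ => exact absurd hy h.1
  | cons h1 h2 ih =>
    cases h' with
    | nil => exact absurd hy' h1.1
    | cons h3 h4 =>
      obtain rfl := hS.det _ _ _ h1.2 h3.2
      obtain ⟨rfl, rfl⟩ := ih hy h4
      exact ⟨rfl, rfl⟩

theorem seg_unique (hS : Good S) {p p' : M} {x : Pt A} (h : seg S f c p x) (h' : seg S f c p' x) :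
    p = p' := by
  obtain ⟨-, z, hz, y, h1, h2⟩ := h
  obtain ⟨-, z', hz', y', h1', h2'⟩ := h'
  obtain rfl := hS.det _ _ _ hz hz'
  exact (off_unique hS h1 h2 h1' h2').1

theorem Good.offStep (hS : Good S) (hf : DefF f) : Good (offStep S f c) where
  det x y z h h' := hS.det x y z h.2 h'.2
  pd := (hS.pd.restrict (hf c).not (DefN.const True)).congr (by simp [UnrankedTrees.offStep])
  plus P hP := by
    have h1 := (hS.plus _ (hP.and (hf c).not)).or _ _ (PD.test _ (DefN.const True))
    have h2 := (h1.comp _ _ hS.pd).restrict (hf c).not hP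
    refine h2.congr fun x y => ?_
    constructor
    · intro h
      induction h using TransGen.head_induction_on with
      | single h => exact ⟨h.1.1, ⟨_, Or.inr ⟨rfl, trivial⟩, h.1.2⟩, h.2⟩
      | head h _ ih =>
        obtain ⟨i1, ⟨z, i2, i3⟩, i4⟩ := ih
        refine ⟨h.1.1, ⟨z, Or.inl ?_, i3⟩, i4⟩
        rcases i2 with i2 | ⟨rfl, -⟩
        · exact TransGen.head ⟨h.1.2, h.2, i1⟩ i2
        · exact TransGen.single ⟨h.1.2, h.2, i1⟩
    · rintro ⟨h1, ⟨z, h2, h3⟩, h4⟩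
      rcases h2 with h2 | ⟨rfl, -⟩
      · induction h2 using TransGen.head_induction_on with
        | single h => exact (TransGen.single ⟨⟨h1, h.1⟩, h.2.1⟩).tail ⟨⟨h.2.2, h3⟩, h4⟩
        | head h _ ih => exact TransGen.head ⟨⟨h1, h.1⟩, h.2.1⟩ (ih h.2.2)
      · exact TransGen.single ⟨⟨h1, h3⟩, h4⟩

theorem Good.jump [Finite M] (hS : Good S) (hf : DefF f)
    (hB : ∀ p, PD (PP (UnrankedTrees.offStep S f c) f p)) : Good (jump S f c) where
  det := by
    rintro x y z ⟨-, hy, w, hw, p, hp⟩ ⟨-, hz, w', hw', p', hp'⟩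
    obtain rfl := hS.det _ _ _ hw hw'
    exact (off_unique hS hp hy hp' hz).2
  pd := by
    refine ((hS.pd.comp _ _ (PD.exists hB)).restrict (hf c) (hf c)).congr fun x y => ?_
    unfold UnrankedTrees.jump
    tauto
  plus P hP := by
    refine ((hS.plus _ ((hf c).not.or hP)).restrict (hf c) (hf c)).congr fun x y => ?_
    constructor
    · have lift : ∀ p a b, PP (UnrankedTrees.offStep S f c) f p a b → ∀ w, S w a → P b →
          TransGen (fun x y => S x y ∧ (¬ f y = c ∨ P y)) w b := by
        intro p a b h
        induction h with
        | nil => exact fun w hw hP => TransGen.single ⟨hw, Or.inr hP⟩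
        | cons h _ ih => exact fun w hw hP => TransGen.head ⟨hw, Or.inl h.1⟩ (ih _ h.2 hP)
      intro h
      induction h with
      | single h =>
        obtain ⟨⟨h1, h2, z, hz, p, hp⟩, hP⟩ := h
        exact ⟨h1, lift p _ _ hp _ hz hP, h2⟩
      | tail _ h ih =>
        obtain ⟨⟨h1, h2, z, hz, p, hp⟩, hP⟩ := h
        exact ⟨ih.1, ih.2.1.trans (lift p _ _ hp _ hz hP), h2⟩
    · rintro ⟨hx, h, hy⟩
      have key : ∀ a, ReflTransGen (fun x y => S x y ∧ (¬ f y = c ∨ P y)) a y →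
          ∃ z, f z = c ∧ (∃ p, PP (UnrankedTrees.offStep S f c) f p a z) ∧
            ReflTransGen (fun x y => UnrankedTrees.jump S f c x y ∧ P y) z y ∧
            (z = a ∨ (f a ≠ c ∧ P z)) := by
        intro a h
        induction h using ReflTransGen.head_induction_on with
        | refl => exact ⟨y, hy, ⟨1, .nil _⟩, .refl, Or.inl rfl⟩
        | @head a b h _ ih =>
          obtain ⟨z, hz, ⟨p, hp⟩, hzy, hor⟩ := ih
          have hPz : P z := by
            rcases hor with rfl | h'
            · exact h.2.resolve_left (fun h' => h' hz)
            · exact h'.2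
          by_cases ha : f a = c
          · exact ⟨a, ha, ⟨1, .nil _⟩, .head ⟨⟨ha, hz, b, h.1, p, hp⟩, hPz⟩ hzy, Or.inl rfl⟩
          · exact ⟨z, hz, ⟨_, .cons ⟨ha, h.1⟩ hp⟩, hzy, Or.inr ⟨ha, hPz⟩⟩
      obtain ⟨b, hb, hby⟩ := TransGen.head'_iff.1 h
      obtain ⟨z, hz, ⟨p, hp⟩, hzy, hor⟩ := key b hby
      refine TransGen.head' ⟨⟨hx, hz, b, hb.1, p, hp⟩, ?_⟩ hzy
      rcases hor with rfl | hzP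
      · exact hb.2.resolve_left (fun hzP => hzP hz)
      · exact hzP.2

/-- The element `c p c` of the local divisor. -/
def LocalDiv.of {M : Type*} [Monoid M] (c p : M) : LocalDiv c :=
  ⟨c * p * c, ⟨c * p, rfl⟩, ⟨p * c, mul_assoc _ _ _⟩⟩

open Classical in
/-- The letter of the compressed word at an occurrence `x` of `c`: the element `c p c` of the local
divisor, where `p` is the product up to the next `c`, and the unit if there is no next `c`. -/
noncomputable def jumpLetter (S : Pt A → Pt A → Prop) (f : Pt A → M) (c : M) (x : Pt A) : LocalDiv c :=
  if h : ∃ p, seg S f c p x then LocalDiv.of c h.choose else 1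

theorem jumpLetter_val (hS : Good S) {p : M} {x : Pt A} (h : seg S f c p x) :
    (jumpLetter S f c x).1 = c * p * c := by
  have h' : ∃ p, seg S f c p x := ⟨p, h⟩
  rw [jumpLetter, dif_pos h', seg_unique hS h h'.choose_spec]
  rfl

theorem seg_def (hS : Good S) (hf : DefF f)
    (hB : ∀ p, PD (PP (offStep S f c) f p)) (p : M) : DefN (seg S f c p) := by
  refine (hS.pd.comp _ _ ((hB p).restrict (DefN.const True) (hf c))).ex.and (hf c) |>.congr ?_
  intro x
  simp only [seg]
  grind

theorem jumpLetter_def [Finite M] (hS : Good S) (hf : DefF f)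
    (hB : ∀ p, PD (PP (offStep S f c) f p)) : DefF (jumpLetter S f c) := by
  intro v
  have h1 : DefN (fun x => ∃ p, seg S f c p x ∧ c * p * c = v.1) :=
    DefN.exists fun p => (seg_def hS hf hB p).and (DefN.const _)
  have h2 : DefN (fun x => ¬ ∃ p, seg S f c p x) := (DefN.exists fun p => seg_def hS hf hB p).not
  refine (h1.or (h2.and (DefN.const (1 = v)))).congr fun x => ?_
  by_cases h : ∃ p, seg S f c p x
  · obtain ⟨p, hp⟩ := h
    have := jumpLetter_val hS hp
    constructor
    · rintro rfl
      exact Or.inl ⟨p, hp, this.symm⟩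
    · rintro (⟨q, hq, hv⟩ | ⟨h, -⟩)
      · obtain rfl := seg_unique hS hp hq
        exact Subtype.ext (this.trans hv)
      · exact absurd ⟨p, hp⟩ h
  · rw [jumpLetter, dif_neg h]
    constructor
    · exact fun hv => Or.inr ⟨h, hv⟩
    · rintro (⟨q, hq, hv⟩ | ⟨-, h⟩)
      · exact absurd ⟨q, hq⟩ h
      · exact h

/-- The product of the compressed word in the local divisor is the product of the original word, from the
first occurrence of `c` to the last one inclusive. -/
theorem jump_sound (hS : Good S) {v : LocalDiv c} {x y z : Pt A}
    (h : PP (jump S f c) (jumpLetter S f c) v x y) (hy : f y = c) (hz : S y z) :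
    PP S f v.1 x z := by
  induction h with
  | nil => exact hy ▸ PP.single hz
  | cons h _ ih =>
    obtain ⟨h1, h2, w, hw, p, hp⟩ := h
    have hl := jumpLetter_val hS ⟨h1, w, hw, _, hp, h2⟩
    rw [LocalDiv.val_mul _ _ _ hl]
    have := (PP.cons hw (hp.mono fun _ _ h => h.2)).append (ih hy hz)
    rwa [h1] at this

/-- A path either avoids the letter `c` or splits into a part before the first `c`, a part from the first
to the last `c`, and a part after it; the middle part is a word over the local divisor. -/
theorem PP_split (hS : Good S) (m : M) (x y : Pt A) : PP S f m x y ↔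
    PP (offStep S f c) f m x y ∨ ∃ (p : M) (v : LocalDiv c) (q : M), p * v.1 * q = m ∧
      ∃ x₁, PP (offStep S f c) f p x x₁ ∧ ∃ x₂, (f x₁ = c ∧
        PP (jump S f c) (jumpLetter S f c) v x₁ x₂ ∧ f x₂ = c) ∧
        ∃ z, S x₂ z ∧ PP (offStep S f c) f q z y := by
  constructor
  · intro h
    induction h with
    | nil => exact Or.inl (.nil _)
    | @cons m x x' y h _ ih =>
      by_cases hx : f x = c
      · rcases ih with ih | ⟨p, v, q, rfl, x₁, h1, x₂, ⟨h2, h3, h4⟩, z, h5, h6⟩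
        · exact Or.inr ⟨1, 1, m, by rw [LocalDiv.val_one, one_mul, hx], x, .nil _, x, ⟨hx, .nil _, hx⟩,
            x', h, ih⟩
        · have hl := jumpLetter_val hS ⟨hx, x', h, _, h1, h2⟩
          refine Or.inr ⟨1, jumpLetter S f c x * v, q, ?_, x, .nil _, x₂,
            ⟨hx, .cons ⟨hx, h2, x', h, p, h1⟩ h3, h4⟩, z, h5, h6⟩
          rw [LocalDiv.val_mul _ _ _ hl, hx]
          simp only [one_mul, mul_assoc]
      · rcases ih with ih | ⟨p, v, q, rfl, x₁, h1, hh⟩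
        · exact Or.inl (.cons ⟨hx, h⟩ ih)
        · exact Or.inr ⟨f x * p, v, q, by simp only [mul_assoc], x₁, .cons ⟨hx, h⟩ h1, hh⟩
  · rintro (h | ⟨p, v, q, rfl, x₁, h1, x₂, ⟨h2, h3, h4⟩, z, h5, h6⟩)
    · exact h.mono fun _ _ h => h.2
    · exact ((h1.mono fun _ _ h => h.2).append (jump_sound hS h3 h4 h5)).append
        (h6.mono fun _ _ h => h.2)

end

/-- The form of `kamp` for a lexicographic induction: on the size of the monoid, then on the number of
letters `G` that occur. Fixing a letter `c ≠ 1` in `G`, the parts without `c` have fewer letters, and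
the compressed word lives in the smaller monoid `LocalDiv c`. -/
theorem kamp_aux.{u} (n : ℕ) : ∀ (M : Type u) [Monoid M] [Finite M], Nat.card M ≤ n →
    (∃ r, ∀ x : M, x ^ (r + 1) = x ^ r) → ∀ (j : ℕ) (G : Set M), G.ncard ≤ j →
    ∀ (S : Pt A → Pt A → Prop) (f : Pt A → M), Good S → DefF f →
      (∀ x y, S x y → f x ∈ G) → ∀ m, PD (PP S f m) := by
  induction n with
  | zero =>
    intro M _ _ h
    have := Nat.card_pos (α := M)
    omega
  | succ n IH =>
    intro M _ _ hM haper j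
    induction j with
    | zero =>
      intro G hG S f hS hf hfG m
      have : G = ∅ := (Set.ncard_eq_zero (Set.toFinite G)).1 (by omega)
      subst this
      refine (PD.test _ (DefN.const (m = 1))).congr fun x y => ?_
      constructor
      · rintro (_ | ⟨h, -⟩)
        · exact ⟨rfl, rfl⟩
        · exact (hfG _ _ h).elim
      · rintro ⟨rfl, rfl⟩
        exact .nil _
    | succ j ih =>
      intro G hG S f hS hf hfG m
      by_cases hc : ∃ c ∈ G, c ≠ 1
      · obtain ⟨c, hcG, hc⟩ := hc
        have hB : ∀ p, PD (PP (offStep S f c) f p) := by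
          refine ih (G \ {c}) ?_ _ f (hS.offStep hf) hf ?_
          · have := Set.ncard_sdiff_singleton_add_one hcG (Set.toFinite G)
            omega
          · exact fun x y h => ⟨hfG x y h.2, h.1⟩
        obtain ⟨r, hr⟩ := haper
        have hJ : ∀ v, PD (PP (jump S f c) (jumpLetter S f c) v) := by
          have := LocalDiv.card_lt hr hc
          exact IH (LocalDiv c) (by omega) ⟨r, LocalDiv.aperiodic hr⟩ _ Set.univ le_rfl _ _
            (hS.jump hf hB) (jumpLetter_def hS hf hB) (fun _ _ _ => trivial)
        refine ((hB m).or _ _ (PD.exists fun p => PD.exists fun v => PD.exists fun q =>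
          PD.guard ((hB p).comp _ _ (((hJ v).restrict (hf c) (hf c)).comp _ _
            (hS.pd.comp _ _ (hB q)))) (p * v.1 * q = m))).congr fun x y => ?_
        exact PP_split hS m x y
      · push Not at hc
        refine (((hS.plus _ (DefN.const True)).or _ _ (PD.test _ (DefN.const True))).guard
          (m = 1)).congr fun x y => ?_
        constructor
        · intro h
          induction h with
          | nil => exact ⟨rfl, Or.inr ⟨rfl, trivial⟩⟩
          | cons h _ ih =>
            refine ⟨by rw [hc _ (hfG _ _ h), ih.1, one_mul], Or.inl ?_⟩
            rcases ih.2 with h' | ⟨rfl, -⟩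
            · exact .head ⟨h, trivial⟩ h'
            · exact .single ⟨h, trivial⟩
        · rintro ⟨rfl, h | ⟨rfl, -⟩⟩
          · induction h using TransGen.head_induction_on with
            | single h =>
              have := PP.single (f := f) h.1
              rwa [hc _ (hfG _ _ h.1)] at this
            | head h _ ih =>
              have := PP.cons h.1 ih
              rwa [hc _ (hfG _ _ h.1), one_mul] at this
          · exact .nil _

/-- For a definable labelling `f` in a finite aperiodic monoid along a deterministic step, the relation
`the path from x to y has product m` is definable by a path formula. -/
theorem kamp {M : Type*} [Monoid M] [Finite M] (haper : ∃ r, ∀ x : M, x ^ (r + 1) = x ^ r)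
    {S : Pt A → Pt A → Prop} {f : Pt A → M} (hS : Good S) (hf : DefF f) (m : M) : PD (PP S f m) :=
  kamp_aux _ M le_rfl haper _ Set.univ le_rfl S f hS hf (fun _ _ _ => trivial) m

/-- The product `g` of a definable labelling along the maximal path is definable. -/
theorem sweep {M : Type*} [Monoid M] [Finite M] (haper : ∃ r, ∀ x : M, x ^ (r + 1) = x ^ r)
    {S : Pt A → Pt A → Prop} {f g : Pt A → M} (hS : Good S) (hf : DefF f)
    (hstep : ∀ x y, S x y → g x = f x * g y) (hend : ∀ x, (∀ y, ¬ S x y) → g x = 1)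
    (hterm : ∀ x, ∃ m y, PP S f m x y ∧ ∀ z, ¬ S y z) : DefF g := by
  intro m
  refine ((kamp haper hS hf m).restrict (DefN.const True) hS.pd.ex.not).ex.congr fun x => ?_
  have key : ∀ p x y, PP S f p x y → (¬ ∃ z, S y z) → g x = p := by
    intro p x y h
    induction h with
    | nil => exact fun h => hend _ (by simpa using h)
    | cons h _ ih => exact fun h' => by rw [hstep _ _ h, ih h']
  constructor
  · rintro rfl
    obtain ⟨m, y, h1, h2⟩ := hterm x
    have h2' : ¬ ∃ z, S y z := by simpa using h2
    exact ⟨y, trivial, by rwa [key _ _ _ h1 h2'], h2'⟩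
  · rintro ⟨y, -, h1, h2⟩
    exact key _ _ _ h1 h2

/-! ### Decompositions of trees -/

/-- The strict sibling order on nodes. -/
def sibO (s t : Node) : Prop := ∃ (u : Node) (i j : ℕ), s = u ++ [i] ∧ t = u ++ [j] ∧ i < j

/-- The strict descendant order on nodes. -/
def SP (s z : Node) : Prop := ∃ (j : ℕ) (w : Node), z = s ++ j :: w

theorem pre_iff {p w w' : Node} {j j' : ℕ} :
    p ++ j :: w <+: p ++ j' :: w' ↔ j = j' ∧ w <+: w' := by
  rw [List.prefix_append_right_inj, List.cons_prefix_cons]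

theorem sib_iff {p w w' : Node} {j j' : ℕ} (h : j ≠ j') :
    sibO (p ++ j :: w) (p ++ j' :: w') ↔ w = [] ∧ w' = [] ∧ j < j' := by
  constructor
  · rintro ⟨u, a, b, h1, h2, hab⟩
    have hu : u = p := by
      rcases List.append_eq_append_iff.1 h1 with ⟨r, rfl, hr⟩ | ⟨r, rfl, hr⟩
      · rcases r with _ | ⟨c, r⟩
        · simp
        · simp only [List.cons_append, List.cons.injEq] at hr
          obtain ⟨rfl, rfl⟩ := hr
          rw [List.append_assoc, List.append_cancel_left_eq] at h2
          simp at h2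
          exact absurd h2.1.symm h
      · rcases r with _ | ⟨c, r⟩
        · simp
        · simp at hr
    subst hu
    simp at h1 h2
    obtain ⟨rfl, rfl⟩ := h1
    obtain ⟨rfl, rfl⟩ := h2
    exact ⟨rfl, rfl, hab⟩
  · rintro ⟨rfl, rfl, h⟩
    exact ⟨p, j, j', rfl, rfl, h⟩

theorem sibO.not_pre {s t : Node} (h : sibO s t) : ¬ s <+: t ∧ ¬ t <+: s := by
  obtain ⟨u, i, j, rfl, rfl, h⟩ := h
  simp
  omega

theorem sib_self {p w w' : Node} {j : ℕ} (h : w <+: w' ∨ w' <+: w) :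
    ¬ sibO (p ++ j :: w) (p ++ j :: w') := by
  intro hs
  have := hs.not_pre
  simp only [pre_iff, true_and] at this
  tauto

theorem SP.pre {s z : Node} (h : SP s z) : s <+: z := by
  obtain ⟨j, w, rfl⟩ := h
  exact List.prefix_append _ _

theorem pre_cases {z p l : Node} (h : z <+: p ++ l) : z <+: p ∨ SP p z := by
  rcases List.prefix_or_prefix_of_prefix h (List.prefix_append p l) with h | ⟨r, rfl⟩
  · exact Or.inl h
  · rcases r with _ | ⟨j, w⟩
    · simp
    · exact Or.inr ⟨j, w, rfl⟩

theorem SP.not_pre {s z : Node} (h : SP s z) : ¬ z <+: s := by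
  obtain ⟨j, w, rfl⟩ := h
  intro h
  have := h.length_le
  simp at this

theorem SP.trans_pre {s z z' : Node} (h : SP s z) (h' : z <+: z') : SP s z' := by
  obtain ⟨j, w, rfl⟩ := h
  obtain ⟨r, rfl⟩ := h'
  exact ⟨j, w ++ r, by simp⟩

theorem sibO.SP_iff {p z z' : Node} (h : sibO z z') : SP p z ↔ SP p z' := by
  have aux : ∀ (u : Node) (i j : ℕ), SP p (u ++ [i]) → SP p (u ++ [j]) := by
    rintro u i j ⟨a, w, hw⟩
    rcases List.eq_nil_or_concat w with rfl | ⟨w, b, rfl⟩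
    · obtain ⟨rfl, -⟩ := List.append_inj' hw rfl
      exact ⟨j, [], rfl⟩
    · have : u ++ [i] = (p ++ a :: w) ++ [b] := by simpa using hw
      obtain ⟨rfl, -⟩ := List.append_inj' this rfl
      exact ⟨a, w ++ [j], by simp⟩
  obtain ⟨u, i, j, rfl, rfl, -⟩ := h
  exact ⟨aux _ _ _, aux _ _ _⟩

/-- The substructure of `T` induced on `S`, with the points of `U` marked. -/
def sub (T : UTree A) (S U : Set Node) : Str A where
  C := {z // z ∈ T.dom ∧ z ∈ S}
  D x y := x.1 <+: y.1
  B x y := sibO x.1 y.1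
  L x := T.label x.1
  U x := x.1 ∈ U

/-- The hypotheses under which an induced substructure is the sum of induced substructures. -/
structure Parts {ι : Type} (S U : ι → Set Node) (S₀ U₀ : Set Node)
    (cD cB : ι → ι → Prop → Prop → Prop) (cU : ι → Prop → Prop) : Prop where
  cov : ∀ z, z ∈ S₀ ↔ ∃ i, z ∈ S i
  dis : ∀ i j z, z ∈ S i → z ∈ S j → i = j
  mark : ∀ i, ∀ z ∈ S i, (z ∈ U₀ ↔ cU i (z ∈ U i))
  D : ∀ i j, ∀ x ∈ S i, ∀ y ∈ S j, i ≠ j → (x <+: y ↔ cD i j (x ∈ U i) (y ∈ U j))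
  B : ∀ i j, ∀ x ∈ S i, ∀ y ∈ S j, i ≠ j → (sibO x y ↔ cB i j (x ∈ U i) (y ∈ U j))

/-- The inclusion of a part. -/
def Parts.incl {ι : Type} {S U : ι → Set Node} {S₀ U₀ : Set Node}
    {cD cB : ι → ι → Prop → Prop → Prop} {cU : ι → Prop → Prop} (h : Parts S U S₀ U₀ cD cB cU)
    (T : UTree A) (i : ι) (x : (sub T (S i) (U i)).C) : (sub T S₀ U₀).C :=
  ⟨x.1, x.2.1, (h.cov _).2 ⟨i, x.2.2⟩⟩

theorem Parts.isSum {ι : Type} {S U : ι → Set Node} {S₀ U₀ : Set Node}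
    {cD cB : ι → ι → Prop → Prop → Prop} {cU : ι → Prop → Prop} (h : Parts S U S₀ U₀ cD cB cU)
    (T : UTree A) : IsSum (fun i => sub T (S i) (U i)) (sub T S₀ U₀) (h.incl T) cD cB cU where
  surj := by
    rintro ⟨z, hz, hz'⟩
    obtain ⟨i, hi⟩ := (h.cov z).1 hz'
    exact ⟨i, ⟨z, hz, hi⟩, rfl⟩
  inj i j x y hxy := by
    have : x.1 = y.1 := congrArg Subtype.val hxy
    exact h.dis i j x.1 x.2.2 (this ▸ y.2.2)
  inj' i x y hxy := by
    have : (h.incl T i x).1 = (h.incl T i y).1 := by rw [hxy]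
    exact Subtype.ext this
  L i x := rfl
  U i x := h.mark i x.1 x.2.2
  D i x y := Iff.rfl
  B i x y := Iff.rfl
  cD i j x y hij := h.D i j x.1 x.2.2 y.1 y.2.2 hij
  cB i j x y hij := h.B i j x.1 x.2.2 y.1 y.2.2 hij

theorem IsSum.type_mul {χ : Cross} {P : Bool → Str A} {M : Str A} {e : ∀ i, (P i).C → M.C}
    (h : IsSum P M e χ.fD χ.fB (fun _ => id)) (k : ℕ) :
    M.type k χ = (P false).type k χ * (P true).type k χ := by
  rw [← χ.type_sum, Str.type_eq]
  refine h.bf (χ.isSum _ _) (p := fun _ => ∅) ?_ (by simp)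
  rintro (_ | _)
  · exact (BF.refl (P false) k).mono (Set.empty_subset _)
  · exact (BF.refl (P true) k).mono (Set.empty_subset _)

theorem sub_type_one {T : UTree A} {S U : Set Node} (h : ∀ z ∈ T.dom, z ∉ S) (k : ℕ) (χ : Cross) :
    (sub T S U).type k χ = 1 := by
  have : IsEmpty (sub T S U).C := ⟨fun x => h x.1 x.2.1 x.2.2⟩
  have h' : StrIso (sub T S U) (Str.empty A) (Equiv.equivOfIsEmpty _ Empty) :=
    ⟨fun x => this.elim x, fun x => this.elim x, fun x => this.elim x, fun x => this.elim x⟩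
  rw [h'.type k χ, type_empty]

/-- One-point structures with equal labels are indistinguishable. -/
theorem point_bf {T T' : UTree A} {s s' : Node} (hs : s ∈ T.dom) (hs' : s' ∈ T'.dom)
    (h : T.label s = T'.label s') (k : ℕ) :
    BF (sub T {s} {s}) (sub T' {s'} {s'}) k {(⟨s, hs, rfl⟩, ⟨s', hs', rfl⟩)} := by
  have e1 : ∀ x : (sub T {s} {s}).C, x = ⟨s, hs, rfl⟩ := fun x => Subtype.ext x.2.2
  have e2 : ∀ x : (sub T' {s'} {s'}).C, x = ⟨s', hs', rfl⟩ := fun x => Subtype.ext x.2.2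
  let e : (sub T {s} {s}).C ≃ (sub T' {s'} {s'}).C :=
    ⟨fun _ => ⟨s', hs', rfl⟩, fun _ => ⟨s, hs, rfl⟩, fun x => (e1 x).symm, fun x => (e2 x).symm⟩
  have he : StrIso (sub T {s} {s}) (sub T' {s'} {s'}) e := by
    refine ⟨fun x => ?_, fun x => ?_, fun x y => ?_, fun x y => ?_⟩
    · rw [e1 x]; exact h.symm
    · rw [e1 x]; exact ⟨fun _ => rfl, fun _ => rfl⟩
    · rw [e1 x, e1 y]; exact ⟨fun _ => List.prefix_rfl, fun _ => List.prefix_rfl⟩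
    · rw [e1 x, e1 y]
      exact ⟨fun h => absurd List.prefix_rfl h.not_pre.1, fun h => absurd List.prefix_rfl h.not_pre.1⟩
  refine (he.bf k).mono ?_
  rintro _ rfl
  rfl

/-- The proper descendants of `s`. -/
def below (s : Node) : Set Node := {z | SP s z}

/-- The subtree rooted at `s`. -/
def tree (s : Node) : Set Node := {z | s <+: z}

/-- The subtrees rooted at the left siblings of `s`. -/
def leftF (s : Node) : Set Node := {z | ∃ u i j w, s = u ++ [i] ∧ j < i ∧ z = u ++ j :: w}

/-- The subtrees rooted at the right siblings of `s`. -/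
def rightF (s : Node) : Set Node := {z | ∃ u i j w, s = u ++ [i] ∧ i < j ∧ z = u ++ j :: w}

/-- The proper descendants of `s` that are not proper descendants of `t`. -/
def btw (t s : Node) : Set Node := {z | SP s z ∧ ¬ SP t z}

/-- The node `s` together with the subtrees rooted at its siblings. -/
def ctx (s : Node) : Set Node := {z | z = s ∨ z ∈ leftF s ∨ z ∈ rightF s}

theorem mem_leftF {p : Node} {i : ℕ} {z : Node} :
    z ∈ leftF (p ++ [i]) ↔ ∃ j w, j < i ∧ z = p ++ j :: w := by
  constructor
  · rintro ⟨u, a, j, w, h, h', rfl⟩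
    obtain ⟨rfl, h2⟩ := List.append_inj' h rfl
    obtain rfl : i = a := by simpa using h2
    exact ⟨j, w, h', rfl⟩
  · rintro ⟨j, w, h, rfl⟩
    exact ⟨p, i, j, w, rfl, h, rfl⟩

theorem mem_rightF {p : Node} {i : ℕ} {z : Node} :
    z ∈ rightF (p ++ [i]) ↔ ∃ j w, i < j ∧ z = p ++ j :: w := by
  constructor
  · rintro ⟨u, a, j, w, h, h', rfl⟩
    obtain ⟨rfl, h2⟩ := List.append_inj' h rfl
    obtain rfl : i = a := by simpa using h2
    exact ⟨j, w, h', rfl⟩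
  · rintro ⟨j, w, h, rfl⟩
    exact ⟨p, i, j, w, rfl, h, rfl⟩

theorem sib_left {p w : Node} {i j : ℕ} : sibO (p ++ j :: w) (p ++ [i]) ↔ w = [] ∧ j < i := by
  by_cases h : j = i
  · subst h
    simp [sib_self]
  · simp [sib_iff h]

theorem sib_right {p w : Node} {i j : ℕ} : sibO (p ++ [i]) (p ++ j :: w) ↔ w = [] ∧ i < j := by
  by_cases h : i = j
  · subst h
    simp [sib_self]
  · simp [sib_iff h]

/-- A subtree is its root plus the proper descendants of the root. -/
theorem tree_parts (s : Node) : Parts (fun b : Bool => bif b then below s else {s})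
    (fun b => bif b then ∅ else {s}) (tree s) {s} (fun i _ _ _ => i = false)
    (fun _ _ _ _ => False) (fun i _ => i = false) where
  cov z := by
    simp only [Bool.exists_bool, cond_true, cond_false, tree, below, Set.mem_ofPred_eq,
      Set.mem_singleton_iff]
    constructor
    · rintro ⟨_ | ⟨j, w⟩, rfl⟩
      · simp
      · exact Or.inr ⟨j, w, rfl⟩
    · rintro (rfl | h)
      · exact List.prefix_rfl
      · exact h.pre
  dis := by
    rintro (_ | _) (_ | _) z h h' <;> try rfl
    · obtain rfl : z = s := h
      exact absurd List.prefix_rfl (SP.not_pre h')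
    · obtain rfl : z = s := h'
      exact absurd List.prefix_rfl (SP.not_pre h)
  mark := by
    rintro (_ | _) z h
    · simpa using h
    · simp only [Set.mem_singleton_iff, Bool.true_eq_false, iff_false]
      rintro rfl
      exact absurd List.prefix_rfl (SP.not_pre h)
  D := by
    rintro (_ | _) (_ | _) z h z' h' hne <;> try exact absurd rfl hne
    · obtain rfl : z = s := h
      simpa using SP.pre h'
    · obtain rfl : z' = s := h'
      simpa using SP.not_pre h
  B := by
    rintro (_ | _) (_ | _) z h z' h' hne <;> try exact absurd rfl hne
    · obtain rfl : z = s := h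
      exact iff_of_false (fun h => h.not_pre.1 (SP.pre h')) id
    · obtain rfl : z' = s := h'
      exact iff_of_false (fun h' => h'.not_pre.2 (SP.pre h)) id

/-- Gluing of forests, the second one to the right of the first; the roots are marked. -/
def χr : Cross := ⟨fun _ _ => False, fun _ _ => False, And, fun _ _ => False⟩

/-- Gluing of forests, the second one to the left of the first; the roots are marked. -/
def χl : Cross := ⟨fun _ _ => False, fun _ _ => False, fun _ _ => False, And⟩

/-- Vertical gluing: the second structure sits above the first one, and its marked points are the
ancestors of all points of the first. -/
def χv : Cross := ⟨fun _ _ => False, fun a _ => a, fun _ _ => False, fun _ _ => False⟩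

theorem mem_tree {p : Node} {i : ℕ} {z : Node} : z ∈ tree (p ++ [i]) ↔ ∃ w, z = p ++ i :: w := by
  simp [tree, List.IsPrefix, eq_comm]

/-- The forest to the right of a node is the subtree of the next sibling, then the forest right of that. -/
theorem right_parts (p : Node) (i : ℕ) : Parts
    (fun b : Bool => bif b then rightF (p ++ [i + 1]) else tree (p ++ [i + 1]))
    (fun b => bif b then {z | sibO (p ++ [i + 1]) z} else {p ++ [i + 1]}) (rightF (p ++ [i]))
    {z | sibO (p ++ [i]) z} χr.fD χr.fB (fun _ => id) where
  cov z := by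
    simp only [Bool.exists_bool, cond_true, cond_false, mem_rightF, mem_tree]
    constructor
    · rintro ⟨j, w, h, rfl⟩
      rcases (Nat.succ_le_iff.2 h).eq_or_lt with rfl | h
      · exact Or.inl ⟨w, rfl⟩
      · exact Or.inr ⟨j, w, h, rfl⟩
    · rintro (⟨w, rfl⟩ | ⟨j, w, h, rfl⟩)
      · exact ⟨_, w, by omega, rfl⟩
      · exact ⟨_, w, by omega, rfl⟩
  dis := by
    rintro (_ | _) (_ | _) z h h' <;> try rfl
    · obtain ⟨w, rfl⟩ := mem_tree.1 h
      obtain ⟨j, w', h, h2⟩ := mem_rightF.1 h'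
      simp at h2; omega
    · obtain ⟨w, rfl⟩ := mem_tree.1 h'
      obtain ⟨j, w', h, h2⟩ := mem_rightF.1 h
      simp at h2; omega
  mark := by
    rintro (_ | _) z h
    · obtain ⟨w, rfl⟩ := mem_tree.1 h
      simp [sib_right]
    · obtain ⟨j, w, h, rfl⟩ := mem_rightF.1 h
      simp [sib_right]; omega
  D := by
    rintro (_ | _) (_ | _) z h z' h' hne <;> try exact absurd rfl hne
    · obtain ⟨w, rfl⟩ := mem_tree.1 h
      obtain ⟨j, w', h, rfl⟩ := mem_rightF.1 h'
      simp [χr, Cross.fD]; omega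
    · obtain ⟨w, rfl⟩ := mem_tree.1 h'
      obtain ⟨j, w', h, rfl⟩ := mem_rightF.1 h
      simp [χr, Cross.fD]; omega
  B := by
    rintro (_ | _) (_ | _) z h z' h' hne <;> try exact absurd rfl hne
    · obtain ⟨w, rfl⟩ := mem_tree.1 h
      obtain ⟨j, w', h, rfl⟩ := mem_rightF.1 h'
      simp [sib_iff h.ne, χr, Cross.fB]
    · obtain ⟨w, rfl⟩ := mem_tree.1 h'
      obtain ⟨j, w', hj, rfl⟩ := mem_rightF.1 h
      simp [sib_iff hj.ne', χr, Cross.fB]; omega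

/-- The forest to the left of a node is the subtree of the previous sibling, then the forest left of that. -/
theorem left_parts (p : Node) (i : ℕ) : Parts
    (fun b : Bool => bif b then leftF (p ++ [i]) else tree (p ++ [i]))
    (fun b => bif b then {z | sibO z (p ++ [i])} else {p ++ [i]}) (leftF (p ++ [i + 1]))
    {z | sibO z (p ++ [i + 1])} χl.fD χl.fB (fun _ => id) where
  cov z := by
    simp only [Bool.exists_bool, cond_true, cond_false, mem_leftF, mem_tree]
    constructor
    · rintro ⟨j, w, h, rfl⟩
      rcases (Nat.lt_succ_iff.1 h).eq_or_lt with rfl | h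
      · exact Or.inl ⟨w, rfl⟩
      · exact Or.inr ⟨j, w, h, rfl⟩
    · rintro (⟨w, rfl⟩ | ⟨j, w, h, rfl⟩)
      · exact ⟨_, w, by omega, rfl⟩
      · exact ⟨_, w, by omega, rfl⟩
  dis := by
    rintro (_ | _) (_ | _) z h h' <;> try rfl
    · obtain ⟨w, rfl⟩ := mem_tree.1 h
      obtain ⟨j, w', h, h2⟩ := mem_leftF.1 h'
      simp at h2; omega
    · obtain ⟨w, rfl⟩ := mem_tree.1 h'
      obtain ⟨j, w', h, h2⟩ := mem_leftF.1 h
      simp at h2; omega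
  mark := by
    rintro (_ | _) z h
    · obtain ⟨w, rfl⟩ := mem_tree.1 h
      simp [sib_left]
    · obtain ⟨j, w, h, rfl⟩ := mem_leftF.1 h
      simp [sib_left]; omega
  D := by
    rintro (_ | _) (_ | _) z h z' h' hne <;> try exact absurd rfl hne
    · obtain ⟨w, rfl⟩ := mem_tree.1 h
      obtain ⟨j, w', h, rfl⟩ := mem_leftF.1 h'
      simp [χl, Cross.fD]; omega
    · obtain ⟨w, rfl⟩ := mem_tree.1 h'
      obtain ⟨j, w', h, rfl⟩ := mem_leftF.1 h
      simp [χl, Cross.fD]; omega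
  B := by
    rintro (_ | _) (_ | _) z h z' h' hne <;> try exact absurd rfl hne
    · obtain ⟨w, rfl⟩ := mem_tree.1 h
      obtain ⟨j, w', h, rfl⟩ := mem_leftF.1 h'
      simp [sib_iff h.ne', χl, Cross.fB]; omega
    · obtain ⟨w, rfl⟩ := mem_tree.1 h'
      obtain ⟨j, w', hj, rfl⟩ := mem_leftF.1 h
      simp [sib_iff hj.ne, χl, Cross.fB]; tauto

theorem mem_ctx {p : Node} {i : ℕ} {z : Node} :
    z ∈ ctx (p ++ [i]) ↔ ∃ j w, z = p ++ j :: w ∧ (j = i → w = []) := by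
  simp only [ctx, Set.mem_ofPred_eq, mem_leftF, mem_rightF]
  constructor
  · rintro (rfl | ⟨j, w, h, rfl⟩ | ⟨j, w, h, rfl⟩)
    · exact ⟨i, [], rfl, fun _ => rfl⟩
    · exact ⟨j, w, rfl, by omega⟩
    · exact ⟨j, w, rfl, by omega⟩
  · rintro ⟨j, w, rfl, h⟩
    rcases lt_trichotomy j i with h' | rfl | h'
    · exact Or.inr (Or.inl ⟨j, w, h', rfl⟩)
    · exact Or.inl (by rw [h rfl])
    · exact Or.inr (Or.inr ⟨j, w, h', rfl⟩)

theorem SP_concat {p z : Node} {i : ℕ} : SP (p ++ [i]) z ↔ ∃ j w, z = p ++ i :: j :: w := by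
  simp [SP]

/-- Moving the lower end of a path from `p` to its child `p ++ [i]` puts the context `ctx (p ++ [i])`
below `btw p s`. The marked points are the nodes on the path. -/
theorem btw_parts (s p : Node) (i : ℕ) (hs : s <+: p) : Parts
    (fun b : Bool => bif b then btw p s else ctx (p ++ [i]))
    (fun b => bif b then {z | z <+: p} else {p ++ [i]}) (btw (p ++ [i]) s)
    {z | z <+: p ++ [i]} χv.fD χv.fB (fun _ => id) where
  cov z := by
    simp only [Bool.exists_bool, cond_true, cond_false, mem_ctx, btw, Set.mem_ofPred_eq, SP_concat]
    constructor
    · rintro ⟨h1, h2⟩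
      by_cases h : SP p z
      · obtain ⟨j, w, rfl⟩ := h
        refine Or.inl ⟨j, w, rfl, ?_⟩
        rintro rfl
        rcases w with _ | ⟨a, w⟩
        · rfl
        · exact absurd ⟨a, w, rfl⟩ h2
      · exact Or.inr ⟨h1, h⟩
    · rintro (⟨j, w, rfl, h⟩ | ⟨h1, h2⟩)
      · refine ⟨?_, ?_⟩
        · obtain ⟨r, rfl⟩ := hs
          rcases r with _ | ⟨a, r⟩
          · exact ⟨j, w, by simp⟩
          · exact ⟨a, r ++ j :: w, by simp⟩
        · rintro ⟨a, w', h'⟩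
          simp only [List.append_cancel_left_eq, List.cons.injEq] at h'
          have := h h'.1
          simp [this] at h'
      · refine ⟨h1, ?_⟩
        rintro ⟨j, w, rfl⟩
        exact h2 ⟨i, j :: w, rfl⟩
  dis := by
    rintro (_ | _) (_ | _) z h h' <;> try rfl
    · obtain ⟨j, w, rfl, -⟩ := mem_ctx.1 h
      exact absurd ⟨j, w, rfl⟩ h'.2
    · obtain ⟨j, w, rfl, -⟩ := mem_ctx.1 h'
      exact absurd ⟨j, w, rfl⟩ h.2
  mark := by
    rintro (_ | _) z h
    · obtain ⟨j, w, rfl, h⟩ := mem_ctx.1 h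
      simp
    · refine ⟨fun h' => (pre_cases h').resolve_right h.2, fun h' => ?_⟩
      exact List.IsPrefix.trans h' (List.prefix_append _ _)
  D := by
    rintro (_ | _) (_ | _) z h z' h' hne <;> try exact absurd rfl hne
    · obtain ⟨j, w, rfl, -⟩ := mem_ctx.1 h
      exact iff_of_false (fun h2 => h'.2 (SP.trans_pre ⟨j, w, rfl⟩ h2)) id
    · obtain ⟨j, w, rfl, -⟩ := mem_ctx.1 h'
      exact ⟨fun h2 => (pre_cases h2).resolve_right h.2, fun h2 => List.IsPrefix.trans h2 (List.prefix_append _ _)⟩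
  B := by
    rintro (_ | _) (_ | _) z h z' h' hne <;> try exact absurd rfl hne
    · obtain ⟨j, w, rfl, -⟩ := mem_ctx.1 h
      exact iff_of_false (fun h2 => h'.2 (h2.SP_iff.1 ⟨j, w, rfl⟩)) id
    · obtain ⟨j, w, rfl, -⟩ := mem_ctx.1 h'
      exact iff_of_false (fun h2 => h.2 (h2.SP_iff.2 ⟨j, w, rfl⟩)) id

/-- The five regions around a node. -/
inductive Region | up | lf | pt | rt | dn

open Region

/-- The five regions around `t`, with a set `X` above and a set `Y` below. -/
def partS (X Y : Set Node) (t : Node) : Region → Set Node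
  | up => X
  | lf => leftF t
  | pt => {t}
  | rt => rightF t
  | dn => Y

/-- The marks of the five regions around a child `t` of `p`: ancestors of `t` above, roots of the
forests at the sides. -/
def partU (p t : Node) : Region → Set Node
  | up => {z | z <+: p}
  | lf => {z | sibO z t}
  | pt => {t}
  | rt => {z | sibO t z}
  | dn => ∅

/-- The descendant relation between distinct regions, as a function of the marks. -/
def partD : Region → Region → Prop → Prop → Prop
  | up, _ => fun a _ => a
  | pt, dn => fun _ _ => True
  | _, _ => fun _ _ => False

/-- The sibling order between distinct regions, as a function of the marks. -/
def partB : Region → Region → Prop → Prop → Prop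
  | lf, rt => And
  | lf, pt => And
  | pt, rt => And
  | _, _ => fun _ _ => False

theorem part_cases {p : Node} {i : ℕ} {X Y : Set Node} (hX : ∀ z ∈ X, ¬ SP p z)
    (hY : ∀ z ∈ Y, SP (p ++ [i]) z) {c : Region} {z : Node} (h : z ∈ partS X Y (p ++ [i]) c) :
    (c = up ∧ ¬ SP p z) ∨ ∃ j w, z = p ++ j :: w ∧ ((c = lf ∧ j < i) ∨ (c = pt ∧ j = i ∧ w = []) ∨
      (c = rt ∧ i < j) ∨ (c = dn ∧ j = i ∧ w ≠ [])) := by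
  cases c
  · exact Or.inl ⟨rfl, hX z h⟩
  · obtain ⟨j, w, hj, rfl⟩ := mem_leftF.1 h
    exact Or.inr ⟨j, w, rfl, Or.inl ⟨rfl, hj⟩⟩
  · obtain rfl : z = _ := h
    exact Or.inr ⟨i, [], rfl, by simp⟩
  · obtain ⟨j, w, hj, rfl⟩ := mem_rightF.1 h
    exact Or.inr ⟨j, w, rfl, by simp [hj]⟩
  · obtain ⟨j, w, rfl⟩ := SP_concat.1 (hY z h)
    exact Or.inr ⟨i, j :: w, rfl, by simp⟩

/-- The regions around a node form a decomposition in the sense of `Parts`. -/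
theorem part_parts {p : Node} {i : ℕ} {X Y S₀ U₀ : Set Node} {cU : Region → Prop → Prop}
    (hX : ∀ z ∈ X, ¬ SP p z) (hY : ∀ z ∈ Y, SP (p ++ [i]) z)
    (hcov : ∀ z, z ∈ S₀ ↔ ∃ c, z ∈ partS X Y (p ++ [i]) c)
    (hU : ∀ c, ∀ z ∈ partS X Y (p ++ [i]) c, (z ∈ U₀ ↔ cU c (z ∈ partU p (p ++ [i]) c))) :
    Parts (partS X Y (p ++ [i])) (partU p (p ++ [i])) S₀ U₀ partD partB cU where
  cov := hcov
  dis := by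
    intro c d z h h'
    rcases part_cases hX hY h with ⟨rfl, h1⟩ | ⟨j, w, rfl, h1⟩
    · rcases part_cases hX hY h' with ⟨rfl, -⟩ | ⟨j, w, rfl, -⟩
      · rfl
      · exact absurd ⟨j, w, rfl⟩ h1
    · rcases part_cases hX hY h' with ⟨rfl, h2⟩ | ⟨j', w', e, h2⟩
      · exact absurd ⟨j, w, rfl⟩ h2
      · simp only [List.append_cancel_left_eq, List.cons.injEq] at e
        obtain ⟨rfl, rfl⟩ := e
        rcases h1 with ⟨rfl, _⟩ | ⟨rfl, _, _⟩ | ⟨rfl, _⟩ | ⟨rfl, _, _⟩ <;>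
        rcases h2 with ⟨rfl, _⟩ | ⟨rfl, _, _⟩ | ⟨rfl, _⟩ | ⟨rfl, _, _⟩ <;>
        first | rfl | omega | contradiction
  mark := hU
  D := by
    intro c d z h z' h' hne
    rcases part_cases hX hY h with ⟨rfl, h1⟩ | ⟨j, w, rfl, h1⟩
    · rcases part_cases hX hY h' with ⟨rfl, -⟩ | ⟨j, w, rfl, -⟩
      · exact absurd rfl hne
      · exact ⟨fun h2 => (pre_cases h2).resolve_right h1,
          fun h2 => List.IsPrefix.trans h2 (List.prefix_append _ _)⟩
    · rcases part_cases hX hY h' with ⟨rfl, h2⟩ | ⟨j', w', rfl, h2⟩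
      · have : ¬ p ++ j :: w <+: z' := fun h3 => h2 (SP.trans_pre ⟨j, w, rfl⟩ h3)
        rcases h1 with ⟨rfl, _⟩ | ⟨rfl, _, _⟩ | ⟨rfl, _⟩ | ⟨rfl, _, _⟩ <;>
        simpa [partD] using this
      · rw [pre_iff]
        rcases h1 with ⟨rfl, _⟩ | ⟨rfl, rfl, rfl⟩ | ⟨rfl, _⟩ | ⟨rfl, rfl, _⟩ <;>
        rcases h2 with ⟨rfl, _⟩ | ⟨rfl, rfl, rfl⟩ | ⟨rfl, _⟩ | ⟨rfl, rfl, _⟩ <;>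
        first
          | exact absurd rfl hne
          | (simp [partD]; done)
          | (simp [partD]; omega)
  B := by
    intro c d z h z' h' hne
    rcases part_cases hX hY h with ⟨rfl, h1⟩ | ⟨j, w, rfl, h1⟩
    · rcases part_cases hX hY h' with ⟨rfl, -⟩ | ⟨j, w, rfl, -⟩
      · exact absurd rfl hne
      · exact iff_of_false (fun h2 => h1 (h2.SP_iff.2 ⟨j, w, rfl⟩)) id
    · rcases part_cases hX hY h' with ⟨rfl, h2⟩ | ⟨j', w', rfl, h2⟩
      · have : ¬ sibO (p ++ j :: w) z' := fun h3 => h2 (h3.SP_iff.1 ⟨j, w, rfl⟩)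
        rcases h1 with ⟨rfl, _⟩ | ⟨rfl, _, _⟩ | ⟨rfl, _⟩ | ⟨rfl, _, _⟩ <;>
        simpa [partB] using this
      · by_cases hj : j = j'
        · subst hj
          rcases h1 with ⟨rfl, _⟩ | ⟨rfl, rfl, rfl⟩ | ⟨rfl, _⟩ | ⟨rfl, rfl, _⟩ <;>
          rcases h2 with ⟨rfl, _⟩ | ⟨rfl, h3, rfl⟩ | ⟨rfl, _⟩ | ⟨rfl, h3, _⟩ <;>
          first
            | exact absurd rfl hne
            | omega
            | simp [partB, sib_self]
        · rw [sib_iff hj]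
          rcases h1 with ⟨rfl, _⟩ | ⟨rfl, rfl, rfl⟩ | ⟨rfl, _⟩ | ⟨rfl, rfl, _⟩ <;>
          rcases h2 with ⟨rfl, _⟩ | ⟨rfl, h3, rfl⟩ | ⟨rfl, _⟩ | ⟨rfl, h3, _⟩ <;>
          first
            | exact absurd rfl hne
            | exact absurd rfl hj
            | exact absurd h3.symm hj
            | (simp [partB, partU, sib_left, sib_right]; done)
            | (simp [partB, partU, sib_left, sib_right]; omega)
            | (simp [partB, partU, sib_left, sib_right, *]; done)
            | (simp [partB, partU, sib_left, sib_right, *]; omega)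

/-! ### Definability of the types around a node -/

open Relation Region

theorem good_chI : Good (A := A) (stepR .chI) where
  det := by
    rintro ⟨T, s, hs⟩ ⟨_, t, ht⟩ ⟨_, u, hu⟩ ⟨rfl, h1⟩ ⟨rfl, h2⟩
    obtain ⟨-, -, i, h1⟩ := h1
    obtain ⟨-, -, j, h2⟩ := h2
    simp only at h1 h2
    obtain ⟨rfl, -⟩ := List.append_inj' (h1.symm.trans h2) rfl
    rfl
  pd := .step _
  plus P hP := .plus _ P hP

theorem good_ns : Good (A := A) (stepR .ns) where
  det := by
    rintro ⟨T, s, hs⟩ ⟨_, t, ht⟩ ⟨_, u, hu⟩ ⟨rfl, h1⟩ ⟨rfl, h2⟩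
    obtain ⟨-, -, v, i, h1, rfl⟩ := h1
    obtain ⟨-, -, v', i', h2, rfl⟩ := h2
    simp only at h1 h2
    obtain ⟨rfl, h⟩ := List.append_inj' (h1.symm.trans h2) rfl
    obtain rfl : i = i' := by simpa using h
    rfl
  pd := .step _
  plus P hP := .plus _ P hP

theorem good_nsI : Good (A := A) (stepR .nsI) where
  det := by
    rintro ⟨T, s, hs⟩ ⟨_, t, ht⟩ ⟨_, u, hu⟩ ⟨rfl, h1⟩ ⟨rfl, h2⟩
    obtain ⟨-, -, v, i, rfl, h1⟩ := h1
    obtain ⟨-, -, v', i', rfl, h2⟩ := h2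
    simp only at h1 h2
    obtain ⟨rfl, h⟩ := List.append_inj' (h1.symm.trans h2) rfl
    obtain rfl : i = i' := by simpa using h
    rfl
  pd := .step _
  plus P hP := .plus _ P hP

theorem exists_terminal {M : Type*} [Monoid M] {S : Pt A → Pt A → Prop} (f : Pt A → M)
    (μ : Pt A → ℕ) (hμ : ∀ x y, S x y → μ y < μ x) (x : Pt A) :
    ∃ m y, PP S f m x y ∧ ∀ z, ¬ S y z := by
  induction h : μ x using Nat.strong_induction_on generalizing x with
  | _ n ih =>
    by_cases hx : ∃ y, S x y
    · obtain ⟨y, hy⟩ := hx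
      obtain ⟨m, z, hz, hz'⟩ := ih (μ y) (h ▸ hμ x y hy) y rfl
      exact ⟨_, z, .cons hy hz, hz'⟩
    · exact ⟨1, x, .nil _, by simpa using hx⟩

open Classical in
/-- The value of `g` at the `S`-successor, and `1` where there is none. -/
noncomputable def nextL {M : Type*} [Monoid M] (S : Pt A → Pt A → Prop) (g : Pt A → M)
    (x : Pt A) : M :=
  if h : ∃ y, S x y then g h.choose else 1

theorem nextL_eq {M : Type*} [Monoid M] {S : Pt A → Pt A → Prop} (hS : Good S) {g : Pt A → M}
    {x y : Pt A} (h : S x y) : nextL S g x = g y := by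
  have h' : ∃ y, S x y := ⟨y, h⟩
  rw [nextL, dif_pos h', hS.det _ _ _ h'.choose_spec h]

theorem nextL_def {M : Type*} [Monoid M] {S : Pt A → Pt A → Prop} (hS : Good S) {g : Pt A → M}
    (hg : DefF g) : DefF (nextL S g) := by
  intro m
  refine ((hS.pd.restrict (DefN.const True) (hg m)).ex.or
    (hS.pd.ex.not.and (DefN.const (1 = m)))).congr fun x => ?_
  by_cases h : ∃ y, S x y
  · obtain ⟨y, hy⟩ := h
    rw [nextL_eq hS hy]
    constructor
    · exact fun h => Or.inl ⟨y, trivial, hy, h⟩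
    · rintro (⟨z, -, hz, h⟩ | ⟨h, -⟩)
      · rwa [hS.det _ _ _ hy hz]
      · exact absurd ⟨y, hy⟩ h
  · rw [nextL, dif_neg h]
    constructor
    · exact fun h' => Or.inr ⟨h, h'⟩
    · rintro (⟨z, -, hz, -⟩ | ⟨-, heq⟩)
      · exact absurd ⟨z, hz⟩ h
      · exact heq

/-- The `k`-type of the forest of proper descendants. -/
def belowT (k : ℕ) (x : Pt A) : KType A k χv := (sub x.T (below x.s) ∅).type k χv

/-- The `k`-type of the subtree, with the root marked. -/
def treeT (k : ℕ) (χ : Cross) (x : Pt A) : KType A k χ := (sub x.T (tree x.s) {x.s}).type k χ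

/-- The `k`-type of the forest to the left, with the left siblings marked. -/
def leftT (k : ℕ) (x : Pt A) : KType A k χl :=
  (sub x.T (leftF x.s) {z | sibO z x.s}).type k χl

/-- The `k`-type of the forest to the right, with the right siblings marked. -/
def rightT (k : ℕ) (x : Pt A) : KType A k χr :=
  (sub x.T (rightF x.s) {z | sibO x.s z}).type k χr

open Classical in
/-- The `k`-type of the node together with the forests to its left and right, and `1` at the root, where
no step to the parent starts. -/
noncomputable def ctxT (k : ℕ) (x : Pt A) : KType A k χv :=
  if x.s = [] then 1 else (sub x.T (ctx x.s) {x.s}).type k χv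

theorem defF_label : DefF (fun x : Pt A => x.T.label x.s) := fun a => DefN.label a

theorem isRoot_iff (x : Pt A) : x.s = [] ↔ ¬ ∃ y, stepR .chI x y := by
  constructor
  · rintro hx ⟨y, h, -, -, i, hi⟩
    simp [hx] at hi
  · intro h
    rcases List.eq_nil_or_concat x.s with h' | ⟨u, i, h'⟩
    · exact h'
    · have h' : x.s = u ++ [i] := by simpa using h'
      have hu : u ∈ x.T.dom := x.T.prefix_closed x.mem (h' ▸ List.prefix_append _ _)
      exact absurd ⟨⟨x.T, u, hu⟩, rfl, hu, x.mem, i, h'⟩ h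

theorem defN_root : DefN (fun x : Pt A => x.s = []) :=
  (PD.step .chI).ex.not.congr isRoot_iff

theorem treeT_def [Finite A] {k : ℕ} (h : DefF (A := A) (belowT k)) (χ : Cross) :
    DefF (A := A) (treeT k χ) := by
  refine (defF_label.prod h).of_inv fun x y hxy => ?_
  obtain ⟨h1, h2⟩ := Prod.mk.inj hxy
  rw [belowT, belowT, Str.type_eq] at h2
  rw [treeT, treeT, Str.type_eq]
  refine ((tree_parts x.s).isSum x.T).bf ((tree_parts y.s).isSum y.T) (p := fun _ => ∅) ?_ (by simp)
  rintro (_ | _)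
  · exact (point_bf x.mem y.mem h1 k).mono (Set.empty_subset _)
  · exact h2

theorem rightT_def [Finite A] {k : ℕ} (h : DefF (A := A) (belowT k)) :
    DefF (A := A) (rightT k) := by
  refine sweep (KType.aperiodic k χr) good_ns (nextL_def good_ns (treeT_def h χr)) ?_ ?_ ?_
  · rintro x y hxy
    rw [nextL_eq good_ns hxy]
    obtain ⟨T, s, hs⟩ := x
    obtain ⟨_, t, ht⟩ := y
    obtain ⟨rfl, -, -, u, i, h1, h2⟩ := hxy
    simp only at h1 h2
    subst h1 h2
    exact ((right_parts u i).isSum T).type_mul k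
  · intro x hx
    refine sub_type_one ?_ _ _
    rintro z hz ⟨u, i, j, w, h1, h2, rfl⟩
    have h3 : u ++ [j] ∈ x.T.dom := x.T.prefix_closed hz (by simp)
    have h4 : u ++ [i + 1] ∈ x.T.dom := by
      rcases (Nat.succ_le_iff.2 h2).eq_or_lt with h | h
      · rw [← h] at h3; exact h3
      · exact x.T.sib_closed h3 h
    exact hx ⟨x.T, _, h4⟩ ⟨rfl, x.mem, h4, u, i, h1, rfl⟩
  · refine exists_terminal _ (fun x => x.T.dom.sup List.sum - x.s.sum) ?_
    rintro ⟨T, s, hs⟩ ⟨_, t, ht⟩ ⟨rfl, -, -, u, i, h1, h2⟩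
    have := Finset.le_sup (f := List.sum) ht
    simp only at h1 h2 ⊢
    subst h1 h2
    simp only [List.sum_append, List.sum_cons, List.sum_nil] at this ⊢
    omega

theorem leftT_def [Finite A] {k : ℕ} (h : DefF (A := A) (belowT k)) :
    DefF (A := A) (leftT k) := by
  refine sweep (KType.aperiodic k χl) good_nsI (nextL_def good_nsI (treeT_def h χl)) ?_ ?_ ?_
  · rintro x y hxy
    rw [nextL_eq good_nsI hxy]
    obtain ⟨T, s, hs⟩ := x
    obtain ⟨_, t, ht⟩ := y
    obtain ⟨rfl, -, -, u, i, h1, h2⟩ := hxy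
    simp only at h1 h2
    subst h1 h2
    exact ((left_parts u i).isSum T).type_mul k
  · intro x hx
    refine sub_type_one ?_ _ _
    rintro z hz ⟨u, _ | i, j, w, h1, h2, rfl⟩
    · omega
    · have h4 : u ++ [i] ∈ x.T.dom := x.T.sib_closed (i := i + 1) (h1 ▸ x.mem) (by omega)
      exact hx ⟨x.T, _, h4⟩ ⟨rfl, h4, x.mem, u, i, rfl, h1⟩
  · refine exists_terminal _ (fun x => x.s.sum) ?_
    rintro ⟨T, s, hs⟩ ⟨_, t, ht⟩ ⟨rfl, -, -, u, i, h1, h2⟩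
    simp only at h1 h2 ⊢
    subst h1 h2
    simp

theorem ctx_parts (p : Node) (i : ℕ) : Parts (partS ∅ ∅ (p ++ [i])) (partU p (p ++ [i]))
    (ctx (p ++ [i])) {p ++ [i]} partD partB (fun c _ => c = pt) := by
  refine part_parts (by simp) (by simp) ?_ ?_
  · intro z
    constructor
    · rintro (h | h | h)
      · exact ⟨pt, h⟩
      · exact ⟨lf, h⟩
      · exact ⟨rt, h⟩
    · rintro ⟨_ | _ | _ | _ | _, h⟩
      · exact h.elim
      · exact Or.inr (Or.inl h)
      · exact Or.inl h
      · exact Or.inr (Or.inr h)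
      · exact h.elim
  · intro c z hz
    rcases part_cases (by simp) (by simp) hz with ⟨rfl, h1⟩ | ⟨j, w, rfl, h⟩
    · exact hz.elim
    · rcases h with ⟨rfl, h⟩ | ⟨rfl, rfl, rfl⟩ | ⟨rfl, h⟩ | ⟨rfl, _, _⟩
      · simp; omega
      · simp
      · simp; omega
      · exact hz.elim

theorem below_parts {s p : Node} {i : ℕ} (hs : s <+: p) :
    Parts (partS (btw p s) (below (p ++ [i])) (p ++ [i])) (partU p (p ++ [i]))
    (below s) ∅ partD partB (fun _ _ => False) := by
  refine part_parts (fun z h => h.2) (fun z h => h) ?_ (by simp)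
  intro z
  have key : ∀ j w, SP s (p ++ j :: w) := by
    intro j w
    obtain ⟨_ | ⟨a, r⟩, rfl⟩ := hs
    · exact ⟨j, w, by simp⟩
    · exact ⟨a, r ++ j :: w, by simp⟩
  constructor
  · intro h
    by_cases h' : SP p z
    · obtain ⟨j, w, rfl⟩ := h'
      rcases lt_trichotomy j i with h | rfl | h
      · exact ⟨lf, mem_leftF.2 ⟨j, w, h, rfl⟩⟩
      · rcases w with _ | ⟨a, w⟩
        · exact ⟨pt, rfl⟩
        · exact ⟨dn, SP_concat.2 ⟨a, w, rfl⟩⟩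
      · exact ⟨rt, mem_rightF.2 ⟨j, w, h, rfl⟩⟩
    · exact ⟨up, h, h'⟩
  · rintro ⟨c, hz⟩
    by_cases hc : c = up
    · subst hc
      exact hz.1
    · rcases part_cases (fun z h => h.2) (fun z h => h) hz with ⟨rfl, h1⟩ | ⟨j, w, rfl, -⟩
      · exact absurd rfl hc
      · exact key j w

theorem bf_nil {T T' : UTree A} {X X' : Set Node} (k : ℕ) :
    BF (sub T ∅ X) (sub T' ∅ X') k ∅ := by
  rw [← Str.type_eq (χ := χv), sub_type_one (by simp), sub_type_one (by simp)]

theorem exists_concat {s : Node} (h : s ≠ []) : ∃ p i, s = p ++ [i] := by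
  rcases List.eq_nil_or_concat s with h' | ⟨u, i, h'⟩
  · exact absurd h' h
  · exact ⟨u, i, by simpa using h'⟩

theorem ctxT_def [Finite A] {k : ℕ} (h : DefF (A := A) (belowT k)) :
    DefF (A := A) (ctxT k) := by
  have hr : DefF (fun x : Pt A => x.s = []) := by
    intro i
    by_cases hi : i
    · exact defN_root.congr (by simp [hi])
    · exact defN_root.not.congr (by simp [hi])
  refine (hr.prod (defF_label.prod ((leftT_def h).prod (rightT_def h)))).of_inv fun x y hxy => ?_
  simp only [Prod.mk.injEq] at hxy
  obtain ⟨h0, h1, h2, h3⟩ := hxy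
  by_cases hx : x.s = []
  · have hy : y.s = [] := by simpa [hx] using h0
    rw [ctxT, ctxT, if_pos hx, if_pos hy]
  · have hy : y.s ≠ [] := by rintro hy; simp [hx, hy] at h0
    rw [ctxT, ctxT, if_neg hx, if_neg hy, Str.type_eq]
    rw [leftT, leftT, Str.type_eq] at h2
    rw [rightT, rightT, Str.type_eq] at h3
    have hpt := (point_bf x.mem y.mem h1 k).mono (Set.empty_subset _)
    obtain ⟨T, s, hs⟩ := x
    obtain ⟨T', s', hs'⟩ := y
    obtain ⟨p, i, rfl⟩ := exists_concat hx
    obtain ⟨p', i', rfl⟩ := exists_concat hy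
    refine ((ctx_parts p i).isSum T).bf ((ctx_parts p' i').isSum T') (p := fun _ => ∅) ?_ (by simp)
    rintro (_ | _ | _ | _ | _)
    · exact bf_nil k
    · exact h2
    · exact hpt
    · exact h3
    · exact bf_nil k

/-- The product of the context types on the way up from `t` to `s` is the type of the region between
them. -/
theorem PP_sound {k : ℕ} {m : KType A k χv} {t s : Pt A} (h : PP (stepR .chI) (ctxT k) m t s) :
    t.T = s.T ∧ s.s <+: t.s ∧ m = (sub t.T (btw t.s s.s) {z | z <+: t.s}).type k χv := by
  induction h with
  | nil => exact ⟨rfl, List.prefix_rfl, (sub_type_one (fun z _ h => h.2 h.1) _ _).symm⟩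
  | @cons m x y z h _ ih =>
    obtain ⟨h1, h2, rfl⟩ := ih
    obtain ⟨T, s, hs⟩ := x
    obtain ⟨_, t, ht⟩ := y
    obtain ⟨rfl, -, -, i, h⟩ := h
    simp only at h h2 h1
    subst h
    refine ⟨h1, h2.trans (List.prefix_append _ _), ?_⟩
    rw [ctxT, if_neg (by simp)]
    exact (((btw_parts z.s t i h2).isSum T).type_mul k).symm

theorem PP_exists {k : ℕ} (T : UTree A) (s : Node) (hs : s ∈ T.dom) (r : Node) :
    ∀ hr : s ++ r ∈ T.dom, ∃ m, PP (stepR .chI) (ctxT k) m ⟨T, s ++ r, hr⟩ ⟨T, s, hs⟩ := by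
  induction r using List.reverseRecOn with
  | nil =>
    simp only [List.append_nil]
    exact fun hr => ⟨1, .nil _⟩
  | append_singleton r i ih =>
    intro hr
    have h1 : s ++ r ∈ T.dom := T.prefix_closed hr (by simp)
    obtain ⟨m, hm⟩ := ih h1
    have hst : stepR .chI (⟨T, s ++ (r ++ [i]), hr⟩ : Pt A) ⟨T, s ++ r, h1⟩ :=
      ⟨rfl, h1, hr, i, by simp⟩
    exact ⟨_, .cons hst hm⟩

/-- The label of a node and the types of the forests to its left, to its right and below it. -/
def nodeData (k : ℕ) (x : Pt A) : A × KType A k χl × KType A k χr × KType A k χv :=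
  (x.T.label x.s, leftT k x, rightT k x, belowT k x)

/-- A type for the region above a node, and the data of the node itself. There are finitely many. -/
abbrev Shape (A : Type) (k : ℕ) : Type 1 :=
  KType A k χv × (A × KType A k χl × KType A k χr × KType A k χv)

/-- The node `t` is a proper descendant of `s`, and `σ` records the data of `t` together with the type of
the region between `s` and the parent of `t`. -/
def Theta (k : ℕ) (σ : Shape A k) (t s : Pt A) : Prop :=
  nodeData k t = σ.2 ∧ ∃ p, stepR .chI t p ∧ PP (stepR .chI) (ctxT k) σ.1 p s

theorem nodeData_def [Finite A] {k : ℕ} (h : DefF (A := A) (belowT k)) :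
    DefF (A := A) (nodeData k) :=
  defF_label.prod ((leftT_def h).prod ((rightT_def h).prod h))

theorem Theta_def [Finite A] {k : ℕ} (h : DefF (A := A) (belowT k)) (σ : Shape A k) :
    PD (Theta k σ) :=
  (((PD.step .chI).comp _ _ (kamp (KType.aperiodic k χv) good_chI (ctxT_def h) σ.1)).restrict
    (nodeData_def h σ.2) (DefN.const True)).congr fun x y => by simp [Theta]

theorem Theta_exists {k : ℕ} {T : UTree A} {t s : Node} (ht : t ∈ T.dom) (hs : s ∈ T.dom)
    (h : SP s t) : ∃ σ, Theta k σ ⟨T, t, ht⟩ ⟨T, s, hs⟩ := by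
  obtain ⟨j, w, rfl⟩ := h
  obtain ⟨r, i, hr⟩ : ∃ r i, j :: w = r ++ [i] := exists_concat (by simp)
  have hp : s ++ r ∈ T.dom := T.prefix_closed ht (by simp [hr])
  obtain ⟨m, hm⟩ := PP_exists (k := k) T s hs r hp
  exact ⟨(m, _), rfl, ⟨T, s ++ r, hp⟩, ⟨rfl, hp, ht, i, by simp [hr]⟩, hm⟩

theorem Theta_SP {k : ℕ} {σ : Shape A k} {t s : Pt A} (h : Theta k σ t s) :
    t.T = s.T ∧ SP s.s t.s := by
  obtain ⟨-, p, hp, hm⟩ := h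
  obtain ⟨h1, h2, -⟩ := PP_sound hm
  obtain ⟨h3, -, -, i, h4⟩ := hp
  refine ⟨h3.trans h1, ?_⟩
  obtain ⟨r, hr⟩ := h2
  rw [h4, ← hr]
  rcases r with _ | ⟨a, r⟩
  · exact ⟨i, [], by simp⟩
  · exact ⟨a, r ++ [i], by simp⟩

/-- The shape `σ` determines the `k`-type of the forest below `s` with `t` as a named point: the five
regions around `t` have equal types, so the composition lemma applies. -/
theorem Theta_bf {k : ℕ} {σ : Shape A k} {T T' : UTree A} {t s t' s' : Node}
    {ht : t ∈ T.dom} {hs : s ∈ T.dom} {ht' : t' ∈ T'.dom} {hs' : s' ∈ T'.dom}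
    (h : Theta k σ ⟨T, t, ht⟩ ⟨T, s, hs⟩) (h' : Theta k σ ⟨T', t', ht'⟩ ⟨T', s', hs'⟩) :
    BF (sub T (below s) ∅) (sub T' (below s') ∅) k
      {(⟨t, ht, (Theta_SP h).2⟩, ⟨t', ht', (Theta_SP h').2⟩)} := by
  obtain ⟨d, ⟨_, p, hp⟩, ⟨h1, -, -, i, h2⟩, h3⟩ := id h
  obtain ⟨d', ⟨_, p', hp'⟩, ⟨h1', -, -, i', h2'⟩, h3'⟩ := id h'
  simp only at h1 h2 h1' h2'
  subst h1 h2 h1' h2'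
  obtain ⟨-, h4, h5⟩ := PP_sound h3
  obtain ⟨-, h4', h5'⟩ := PP_sound h3'
  have hb := h5.symm.trans h5'
  have hd := d.trans d'.symm
  simp only [nodeData, Prod.mk.injEq, leftT, rightT, belowT, Str.type_eq] at hd hb
  obtain ⟨e1, e2, e3, e4⟩ := hd
  refine ((below_parts (i := i) h4).isSum T).bf ((below_parts (i := i') h4').isSum T')
    (p := fun c => match c with
      | pt => {(⟨_, ht, rfl⟩, ⟨_, ht', rfl⟩)}
      | up => ∅
      | lf => ∅
      | rt => ∅
      | dn => ∅) ?_ ?_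
  · rintro (_ | _ | _ | _ | _)
    · exact hb
    · exact e2
    · exact point_bf ht ht' e1 k
    · exact e3
    · exact e4
  · rintro _ rfl
    exact ⟨pt, _, rfl, rfl⟩

/-- The types of the forests below nodes are definable. By induction on `k`: the `(k + 1)`-type is
determined by the `k`-type and the set of shapes realised by the descendants, because after the first
move the shape of the chosen node decides the rest of the game. -/
theorem belowT_def [Finite A] (k : ℕ) : DefF (A := A) (belowT k) := by
  induction k with
  | zero =>
    intro c
    refine (DefN.const (∃ x : Pt A, belowT 0 x = c)).congr fun x => ⟨fun h => ⟨x, h⟩, ?_⟩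
    rintro ⟨y, rfl⟩
    rw [belowT, belowT, Str.type_eq]
    exact fun a ha => ha.elim
  | succ k ih =>
    intro c
    have h1 : ∀ σ : Shape A k, DefN (fun s => ∃ t, Theta k σ t s) := fun σ => (Theta_def ih σ).conv.ex
    have h2 : ∀ o : Shape A k ⊕ KType A k χv, DefN (fun s => Sum.elim
        (fun σ => ∃ t, Theta k σ t s) (fun c => belowT k s = c) o) := by
      rintro (σ | c)
      · exact h1 σ
      · exact ih c
    refine DefN.of_inv h2 fun x y hxy => ?_
    rintro rfl
    have hk : belowT k y = belowT k x := (hxy (.inr _)).1 rfl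
    have hσ : ∀ σ, (∃ t, Theta k σ t x) ↔ (∃ t, Theta k σ t y) := fun σ => hxy (.inl σ)
    rw [belowT, belowT, Str.type_eq] at hk ⊢
    have key : ∀ x y : Pt A, (∀ σ, (∃ t, Theta k σ t x) → (∃ t, Theta k σ t y)) →
        ∀ a, ∃ b, BF (sub x.T (below x.s) ∅) (sub y.T (below y.s) ∅) k {(a, b)} := by
      rintro ⟨T, s, hs⟩ ⟨T', s', hs'⟩ h ⟨t, ht, hst⟩
      obtain ⟨σ, hσ⟩ := Theta_exists (k := k) ht hs hst
      obtain ⟨⟨T'', t', ht'⟩, hσ'⟩ := h σ ⟨_, hσ⟩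
      obtain rfl : T'' = T' := (Theta_SP hσ').1
      exact ⟨_, Theta_bf hσ hσ'⟩
    refine ⟨hk, fun a => ?_, fun b => ?_⟩
    · obtain ⟨b, hb⟩ := key y x (fun σ => (hσ σ).2) a
      exact ⟨b, by simpa using hb⟩
    · obtain ⟨a, ha⟩ := key x y (fun σ => (hσ σ).1) b
      exact ⟨a, ha.symm.mono (by rintro _ (rfl | h); rfl; exact h.elim)⟩

/-! ### From first-order logic to Conditional XPath -/

/-- Quantifier rank. -/
def FO.rank : FO A → ℕ
  | .eq _ _ => 0
  | .desc _ _ => 0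
  | .sib _ _ => 0
  | .lab _ _ => 0
  | .not φ => φ.rank
  | .and φ ψ => max φ.rank ψ.rank
  | .ex _ φ => φ.rank + 1

/-- The tree as a structure. Its root is marked, since the sibling relation of a tree is reflexive exactly
at the other nodes. -/
def whole (T : UTree A) : Str A := sub T (tree []) {[]}

theorem BF.agree {M N : Str A} {k : ℕ} {p : Set (M.C × N.C)} (h : BF M N k p) : Agree M N p := by
  induction k with
  | zero => exact h
  | succ k ih => exact ih h.1

theorem sibR_iff {T : UTree A} {s t : Node} (hs : s ∈ T.dom) (ht : t ∈ T.dom) :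
    T.sibR s t ↔ sibO s t ∨ (s = t ∧ ¬ s = []) := by
  constructor
  · rintro ⟨-, -, u, i, j, rfl, rfl, h⟩
    rcases h.lt_or_eq with h | rfl
    · exact Or.inl ⟨u, i, j, rfl, rfl, h⟩
    · exact Or.inr ⟨rfl, by simp⟩
  · rintro (⟨u, i, j, rfl, rfl, h⟩ | ⟨rfl, h⟩)
    · exact ⟨hs, ht, u, i, j, rfl, rfl, h.le⟩
    · obtain ⟨u, i, rfl⟩ := exists_concat h
      exact ⟨hs, ht, u, i, i, rfl, rfl, le_rfl⟩

/-- A position in which Duplicator survives `k` rounds satisfies the same formulas of rank at most `k`. -/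
theorem BF.sat {T T' : UTree A} (φ : FO A) : ∀ {k : ℕ} {p : Set ((whole T).C × (whole T').C)}
    {v v' : ℕ → Node}, BF (whole T) (whole T') k p → φ.rank ≤ k →
    (∀ n, ∃ a ∈ p, a.1.1 = v n ∧ a.2.1 = v' n) → (φ.Sat T v ↔ φ.Sat T' v') := by
  induction φ with
  | eq x y =>
    intro k p v v' h _ hv
    obtain ⟨a, ha, h1, h1'⟩ := hv x
    obtain ⟨b, hb, h2, h2'⟩ := hv y
    have := ((h.agree a ha).2.2 b hb).1
    simp only [FO.Sat, ← h1, ← h2, ← h1', ← h2']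
    exact Subtype.ext_iff.symm.trans (this.trans Subtype.ext_iff)
  | desc x y =>
    intro k p v v' h _ hv
    obtain ⟨a, ha, h1, h1'⟩ := hv x
    obtain ⟨b, hb, h2, h2'⟩ := hv y
    have := ((h.agree a ha).2.2 b hb).2.1
    simp only [FO.Sat, ← h1, ← h2, ← h1', ← h2', UTree.descR, a.1.2.1, b.1.2.1, a.2.2.1, b.2.2.1,
      true_and]
    exact this
  | sib x y =>
    intro k p v v' h _ hv
    obtain ⟨a, ha, h1, h1'⟩ := hv x
    obtain ⟨b, hb, h2, h2'⟩ := hv y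
    have hB := ((h.agree a ha).2.2 b hb).2.2
    have hE := ((h.agree a ha).2.2 b hb).1
    have hU := (h.agree a ha).2.1
    simp only [FO.Sat, ← h1, ← h2, ← h1', ← h2']
    rw [sibR_iff a.1.2.1 b.1.2.1, sibR_iff a.2.2.1 b.2.2.1]
    exact or_congr hB (and_congr (Subtype.ext_iff.symm.trans (hE.trans Subtype.ext_iff))
      (not_congr hU))
  | lab c x =>
    intro k p v v' h _ hv
    obtain ⟨a, ha, h1, h1'⟩ := hv x
    have hL : T.label a.1.1 = T'.label a.2.1 := (h.agree a ha).1
    simp only [FO.Sat, ← h1, ← h1', a.1.2.1, a.2.2.1, hL]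
  | not φ ih =>
    intro k p v v' h hr hv
    exact not_congr (ih h hr hv)
  | and φ ψ ih ih' =>
    intro k p v v' h hr hv
    exact and_congr (ih h ((le_max_left _ _).trans hr) hv) (ih' h ((le_max_right _ _).trans hr) hv)
  | ex n φ ih =>
    intro k p v v' h hr hv
    rcases k with _ | k
    · simp [FO.rank] at hr
    have hr : φ.rank ≤ k := by simpa [FO.rank] using hr
    have upd : ∀ x : (whole T).C, ∀ y : (whole T').C, BF (whole T) (whole T') k (insert (x, y) p) →
        (φ.Sat T (Function.update v n x.1) ↔ φ.Sat T' (Function.update v' n y.1)) := by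
      intro x y hxy
      refine ih hxy hr fun m => ?_
      by_cases hm : m = n
      · subst hm
        exact ⟨(x, y), Or.inl rfl, by simp⟩
      · obtain ⟨a, ha, h1⟩ := hv m
        exact ⟨a, Or.inr ha, by simpa [hm] using h1⟩
    simp only [FO.Sat]
    constructor
    · rintro ⟨s, hs, h1⟩
      obtain ⟨y, hy⟩ := h.2.1 ⟨s, hs, List.nil_prefix⟩
      exact ⟨y.1, y.2.1, (upd _ _ hy).1 h1⟩
    · rintro ⟨s, hs, h1⟩
      obtain ⟨x, hx⟩ := h.2.2 ⟨s, hs, List.nil_prefix⟩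
      exact ⟨x.1, x.2.1, (upd _ _ hx).2 h1⟩

theorem SP_nil {s : Node} (h : s ≠ []) : SP [] s := by
  obtain ⟨j, w, rfl⟩ := List.exists_cons_of_ne_nil h
  exact ⟨j, w, rfl⟩

theorem whole_bf_root {T T' : UTree A} {k : ℕ} (hl : T.label [] = T'.label [])
    (hb : belowT k ⟨T, [], T.nil_mem⟩ = belowT k ⟨T', [], T'.nil_mem⟩) :
    BF (whole T) (whole T') k
      {(⟨[], T.nil_mem, List.nil_prefix⟩, ⟨[], T'.nil_mem, List.nil_prefix⟩)} := by
  rw [belowT, belowT, Str.type_eq] at hb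
  refine ((tree_parts []).isSum T).bf ((tree_parts []).isSum T')
    (p := fun c => match c with
      | true => ∅
      | false => {(⟨_, T.nil_mem, rfl⟩, ⟨_, T'.nil_mem, rfl⟩)}) ?_ ?_
  · rintro (_ | _)
    · exact point_bf T.nil_mem T'.nil_mem hl k
    · exact hb
  · rintro _ rfl
    exact ⟨false, _, rfl, rfl⟩

/-- A node is characterised up to `k` rounds by its shape relative to the root and the label of the root. -/
theorem whole_bf {T T' : UTree A} {k : ℕ} {σ : Shape A k} {s s' : Node} {hs : s ∈ T.dom}
    {hs' : s' ∈ T'.dom} (hl : T.label [] = T'.label [])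
    (h : Theta k σ ⟨T, s, hs⟩ ⟨T, [], T.nil_mem⟩)
    (h' : Theta k σ ⟨T', s', hs'⟩ ⟨T', [], T'.nil_mem⟩) :
    BF (whole T) (whole T') k {(⟨s, hs, List.nil_prefix⟩, ⟨s', hs', List.nil_prefix⟩)} := by
  refine ((tree_parts []).isSum T).bf ((tree_parts []).isSum T')
    (p := fun c => match c with
      | true => {(⟨_, hs, (Theta_SP h).2⟩, ⟨_, hs', (Theta_SP h').2⟩)}
      | false => ∅) ?_ ?_
  · rintro (_ | _)
    · exact (point_bf T.nil_mem T'.nil_mem hl k).mono (Set.empty_subset _)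
    · exact Theta_bf h h'
  · rintro _ rfl
    exact ⟨true, _, rfl, rfl⟩

/-- First-order definable properties of nodes are definable by node formulas. Every variable is assigned
the distinguished node. -/
theorem defN_of_fo [Finite A] (φ : FO A) : DefN (fun x : Pt A => φ.Sat x.T (fun _ => x.s)) := by
  set k := φ.rank with hk
  have h2 : ∀ o : (A × KType A k χv) ⊕ (A × Shape A k) ⊕ Unit, DefN (fun x : Pt A => Sum.elim
      (fun c => (x.T.label x.s, belowT k x) = c) (Sum.elim
      (fun c => ∃ r, True ∧ Theta k c.2 x r ∧ (r.s = [] ∧ r.T.label r.s = c.1))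
      (fun _ => x.s = [])) o) := by
    rintro (c | c | _)
    · exact (defF_label.prod (belowT_def k)) c
    · exact ((Theta_def (belowT_def k) c.2).restrict (DefN.const True)
        (defN_root.and (DefN.label c.1))).ex
    · exact defN_root
  refine DefN.of_inv h2 fun x y hxy hx => ?_
  obtain ⟨T, s, hs⟩ := x
  obtain ⟨T', s', hs'⟩ := y
  have hroot : s = [] ↔ s' = [] := hxy (.inr (.inr ()))
  by_cases h : s = []
  · obtain rfl := hroot.1 h
    subst h
    have := Prod.mk.inj ((hxy (.inl _)).1 rfl)
    refine (BF.sat φ (whole_bf_root this.1.symm this.2.symm) le_rfl fun n => ?_).1 hx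
    exact ⟨_, rfl, rfl, rfl⟩
  · obtain ⟨σ, hσ⟩ := Theta_exists (k := k) hs T.nil_mem (SP_nil h)
    obtain ⟨⟨T'', r, hr⟩, -, h1, h3, h4⟩ :=
      (hxy (.inr (.inl (T.label [], σ)))).1 ⟨_, trivial, hσ, rfl, rfl⟩
    obtain rfl : T' = T'' := (Theta_SP h1).1
    simp only at h3
    subst h3
    refine (BF.sat φ (whole_bf h4.symm hσ h1) le_rfl fun n => ?_).1 hx
    exact ⟨_, rfl, rfl, rfl⟩

/-! ### From Conditional XPath to first-order logic -/

/-- The query `P` is first-order definable, with any prescribed variable `x` as its argument. -/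
def FO1 (P : UTree A → Node → Prop) : Prop :=
  ∀ x : ℕ, ∃ φ : FO A, ∀ (T : UTree A) (v : ℕ → Node), v x ∈ T.dom → (φ.Sat T v ↔ P T (v x))

/-- The binary query `R` is first-order definable, with any prescribed variables as arguments, which may
coincide. -/
def FO2 (R : UTree A → Node → Node → Prop) : Prop :=
  ∀ x y : ℕ, ∃ φ : FO A, ∀ (T : UTree A) (v : ℕ → Node), v x ∈ T.dom → v y ∈ T.dom →
    (φ.Sat T v ↔ R T (v x) (v y))

theorem FO2.congr {R R' : UTree A → Node → Node → Prop} (h : FO2 R)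
    (hR : ∀ T, ∀ s ∈ T.dom, ∀ t ∈ T.dom, (R' T s t ↔ R T s t)) : FO2 R' := by
  intro x y
  obtain ⟨φ, hφ⟩ := h x y
  exact ⟨φ, fun T v hx hy => (hφ T v hx hy).trans (hR T _ hx _ hy).symm⟩

theorem FO2.swap {R : UTree A → Node → Node → Prop} (h : FO2 R) : FO2 (fun T s t => R T t s) := by
  intro x y
  obtain ⟨φ, hφ⟩ := h y x
  exact ⟨φ, fun T v hx hy => hφ T v hy hx⟩

theorem FO1.fst {P : UTree A → Node → Prop} (h : FO1 P) : FO2 (fun T s _ => P T s) := by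
  intro x y
  obtain ⟨φ, hφ⟩ := h x
  exact ⟨φ, fun T v hx _ => hφ T v hx⟩

theorem FO2.eq : FO2 (fun (_ : UTree A) s t => s = t) :=
  fun x y => ⟨.eq x y, fun _ _ _ _ => Iff.rfl⟩

theorem FO1.not {P : UTree A → Node → Prop} (h : FO1 P) : FO1 (fun T s => ¬ P T s) := by
  intro x
  obtain ⟨φ, hφ⟩ := h x
  exact ⟨.not φ, fun T v hx => not_congr (hφ T v hx)⟩

theorem FO1.or {P Q : UTree A → Node → Prop} (h : FO1 P) (h' : FO1 Q) :
    FO1 (fun T s => P T s ∨ Q T s) := by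
  intro x
  obtain ⟨φ, hφ⟩ := h x
  obtain ⟨ψ, hψ⟩ := h' x
  refine ⟨.not (.and (.not φ) (.not ψ)), fun T v hx => ?_⟩
  simp only [FO.Sat, hφ T v hx, hψ T v hx]
  tauto

theorem FO2.not {R : UTree A → Node → Node → Prop} (h : FO2 R) : FO2 (fun T s t => ¬ R T s t) := by
  intro x y
  obtain ⟨φ, hφ⟩ := h x y
  exact ⟨.not φ, fun T v hx hy => not_congr (hφ T v hx hy)⟩

theorem FO2.and {R R' : UTree A → Node → Node → Prop} (h : FO2 R) (h' : FO2 R') :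
    FO2 (fun T s t => R T s t ∧ R' T s t) := by
  intro x y
  obtain ⟨φ, hφ⟩ := h x y
  obtain ⟨ψ, hψ⟩ := h' x y
  exact ⟨.and φ ψ, fun T v hx hy => and_congr (hφ T v hx hy) (hψ T v hx hy)⟩

theorem FO2.or {R R' : UTree A → Node → Node → Prop} (h : FO2 R) (h' : FO2 R') :
    FO2 (fun T s t => R T s t ∨ R' T s t) :=
  (h.not.and h'.not).not.congr fun _ _ _ _ _ => by tauto

theorem FO2.comp {R R' : UTree A → Node → Node → Prop} (h : FO2 R) (h' : FO2 R') :
    FO2 (fun T s t => ∃ u ∈ T.dom, R T s u ∧ R' T u t) := by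
  intro x y
  -- a bound variable distinct from both `x` and `y`
  have hx : x ≠ x + y + 1 := by omega
  have hy : y ≠ x + y + 1 := by omega
  obtain ⟨φ, hφ⟩ := h x (x + y + 1)
  obtain ⟨ψ, hψ⟩ := h' (x + y + 1) y
  refine ⟨.ex (x + y + 1) (.and φ ψ), fun T v hvx hvy => ?_⟩
  refine exists_congr fun u => and_congr_right fun hu => ?_
  have h1 := hφ T (Function.update v (x + y + 1) u)
  have h2 := hψ T (Function.update v (x + y + 1) u)
  rw [Function.update_of_ne hx, Function.update_self] at h1
  rw [Function.update_of_ne hy, Function.update_self] at h2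
  exact and_congr (h1 hvx hu) (h2 hu hvy)

theorem FO2.ex {R : UTree A → Node → Node → Prop} (h : FO2 R) :
    FO1 (fun T s => ∃ t ∈ T.dom, R T s t) := by
  intro x
  obtain ⟨φ, hφ⟩ := h x (x + 1)
  refine ⟨.ex (x + 1) φ, fun T v hvx => exists_congr fun u => and_congr_right fun hu => ?_⟩
  have h1 := hφ T (Function.update v (x + 1) u)
  rw [Function.update_of_ne (by omega), Function.update_self] at h1
  exact h1 hvx hu

section Paths

variable {α : Type*} {r : α → α → Prop}

theorem transGen_last (hr : ∀ a b c, r a c → r b c → a = b) {z b t : α} (h : TransGen r z t)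
    (hb : r b t) : z = b ∨ TransGen r z b := by
  cases h with
  | single h => exact Or.inl (hr _ _ _ h hb)
  | tail h hct => exact Or.inr (hr _ _ _ hct hb ▸ h)

/-- If predecessors are unique, a path along which `P` holds is an arbitrary path all of whose
intermediate points, being uniquely determined, satisfy `P`. -/
theorem until_iff_of_cofunctional (hr : ∀ a b c, r a c → r b c → a = b)
    (hi : ∀ a, ¬ TransGen r a a) (P : α → Prop) (s t : α) :
    TransGen (fun a b => r a b ∧ P b) s t ↔
      TransGen r s t ∧ ∀ z, TransGen r s z → (z = t ∨ TransGen r z t) → P z := by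
  constructor
  · intro h
    refine ⟨TransGen.mono (fun _ _ h => h.1) _ _ h, ?_⟩
    induction h with
    | single h =>
      rintro z hz (rfl | h')
      · exact h.2
      · rcases transGen_last hr h' h.1 with rfl | h''
        · exact absurd hz (hi _)
        · exact absurd (hz.trans h'') (hi _)
    | tail _ h ih =>
      rintro z hz (rfl | h')
      · exact h.2
      · exact ih z hz (transGen_last hr h' h.1)
  · rintro ⟨h, hP⟩
    induction h with
    | single h => exact .single ⟨h, hP _ (.single h) (Or.inl rfl)⟩
    | tail h1 h ih =>
      refine (ih fun z hz hz' => hP z hz (Or.inr ?_)).tail ⟨h, hP _ (h1.tail h) (Or.inl rfl)⟩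
      rcases hz' with rfl | hz'
      · exact .single h
      · exact hz'.tail h

theorem transGen_first (hr : ∀ a b c, r a b → r a c → b = c) {z b s : α} (h : TransGen r s z)
    (hb : r s b) : z = b ∨ TransGen r b z := by
  obtain ⟨c, h, hcz⟩ := TransGen.head'_iff.1 h
  obtain rfl := hr _ _ _ hb h
  exact reflTransGen_iff_eq_or_transGen.1 hcz

/-- The analogue of `until_iff_of_cofunctional` for unique successors. -/
theorem until_iff_of_functional (hr : ∀ a b c, r a b → r a c → b = c)
    (hi : ∀ a, ¬ TransGen r a a) (P : α → Prop) (s t : α) :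
    TransGen (fun a b => r a b ∧ P b) s t ↔
      TransGen r s t ∧ ∀ z, TransGen r s z → (z = t ∨ TransGen r z t) → P z := by
  constructor
  · intro h
    refine ⟨TransGen.mono (fun _ _ h => h.1) _ _ h, ?_⟩
    induction h using TransGen.head_induction_on with
    | single h =>
      intro z hz h'
      rcases transGen_first hr hz h.1 with rfl | h''
      · exact h.2
      · rcases h' with rfl | h'
        · exact absurd h'' (hi _)
        · exact absurd (h''.trans h') (hi _)
    | head h _ ih =>
      intro z hz h'
      rcases transGen_first hr hz h.1 with rfl | h''
      · exact h.2
      · exact ih z h'' h'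
  · rintro ⟨h, hP⟩
    induction h using TransGen.head_induction_on with
    | single h => exact .single ⟨h, hP _ (.single h) (Or.inl rfl)⟩
    | head h h1 ih =>
      exact (ih fun z hz hz' => hP z (hz.head h) hz').head ⟨h, hP _ (.single h) (Or.inr h1)⟩

theorem step_iff_of_cofunctional (hr : ∀ a b c, r a c → r b c → a = b)
    (hi : ∀ a, ¬ TransGen r a a) (s t : α) :
    r s t ↔ TransGen r s t ∧ ¬ ∃ z, TransGen r s z ∧ TransGen r z t := by
  constructor
  · refine fun h => ⟨.single h, ?_⟩
    rintro ⟨z, h1, h2⟩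
    rcases transGen_last hr h2 h with rfl | h3
    · exact hi _ h1
    · exact hi _ (h1.trans h3)
  · rintro ⟨h, h'⟩
    cases h with
    | single h => exact h
    | tail h1 h2 => exact absurd ⟨_, h1, .single h2⟩ h'

end Paths

theorem transGen_dom {T : UTree A} {st : XStep} {s t : Node} (h : TransGen (st.rel T) s t) :
    s ∈ T.dom ∧ t ∈ T.dom := by
  induction h with
  | single h => exact XStep.rel_dom h
  | tail _ h ih => exact ⟨ih.1, (XStep.rel_dom h).2⟩

theorem transGen_ch {T : UTree A} {s t : Node} :
    TransGen (XStep.ch.rel T) s t ↔ T.descR s t ∧ s ≠ t := by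
  constructor
  · intro h
    have h2 : s <+: t ∧ s.length < t.length := by
      induction h with
      | single h =>
        obtain ⟨-, -, i, rfl⟩ := h
        simp
      | tail _ h ih =>
        obtain ⟨-, -, i, rfl⟩ := h
        refine ⟨ih.1.trans (List.prefix_append _ _), ?_⟩
        simp
        omega
    refine ⟨⟨(transGen_dom h).1, (transGen_dom h).2, h2.1⟩, ?_⟩
    rintro rfl
    exact absurd h2.2 (lt_irrefl _)
  · rintro ⟨⟨hs, ht, w, rfl⟩, hne⟩
    induction w using List.reverseRecOn with
    | nil => simp at hne
    | append_singleton w i ih =>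
      rw [← List.append_assoc] at ht
      have hw : s ++ w ∈ T.dom := T.prefix_closed ht (List.prefix_append _ _)
      have hst : XStep.ch.rel T (s ++ w) (s ++ (w ++ [i])) :=
        ⟨hw, by rwa [← List.append_assoc], i, by simp⟩
      by_cases h : w = []
      · subst h
        simpa using TransGen.single hst
      · exact (ih (by simpa using h) hw).tail hst

theorem transGen_ns {T : UTree A} {s t : Node} :
    TransGen (XStep.ns.rel T) s t ↔ T.sibR s t ∧ s ≠ t := by
  constructor
  · intro h
    have h2 : sibO s t := by
      induction h with
      | single h =>
        obtain ⟨-, -, u, i, rfl, rfl⟩ := h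
        exact ⟨u, i, i + 1, rfl, rfl, by omega⟩
      | tail _ h ih =>
        obtain ⟨-, -, u, i, rfl, rfl⟩ := h
        obtain ⟨u', j, i', rfl, h, hj⟩ := ih
        obtain ⟨rfl, h⟩ := List.append_inj' h rfl
        obtain rfl : i = i' := by simpa using h
        exact ⟨u, j, i + 1, rfl, rfl, by omega⟩
    refine ⟨(sibR_iff (transGen_dom h).1 (transGen_dom h).2).2 (Or.inl h2), ?_⟩
    rintro rfl
    exact h2.not_pre.1 List.prefix_rfl
  · rintro ⟨⟨hs, ht, u, i, j, rfl, rfl, hij⟩, hne⟩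
    have hlt : i < j := lt_of_le_of_ne hij (by rintro rfl; exact hne rfl)
    clear hij hne
    induction j, hlt using Nat.le_induction with
    | base => exact .single ⟨hs, ht, u, i, rfl, rfl⟩
    | succ j hj ih =>
      have hj' : u ++ [j] ∈ T.dom := T.sib_closed ht (Nat.lt_succ_self j)
      exact (ih hj').tail ⟨hj', ht, u, j, rfl, rfl⟩

theorem ch_cofunctional (T : UTree A) (a b c : Node) (h : XStep.ch.rel T a c)
    (h' : XStep.ch.rel T b c) : a = b := by
  obtain ⟨-, -, i, rfl⟩ := h
  obtain ⟨-, -, j, h⟩ := h'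
  exact (List.append_inj' h rfl).1

theorem ns_cofunctional (T : UTree A) (a b c : Node) (h : XStep.ns.rel T a c)
    (h' : XStep.ns.rel T b c) : a = b := by
  obtain ⟨-, -, u, i, rfl, rfl⟩ := h
  obtain ⟨-, -, u', j, rfl, h⟩ := h'
  obtain ⟨rfl, h⟩ := List.append_inj' h rfl
  simp at h
  rw [h]

theorem FO2.transGen (st : XStep) : FO2 (fun (T : UTree A) => TransGen (st.rel T)) := by
  have hch : FO2 (fun (T : UTree A) => TransGen (XStep.ch.rel T)) :=
    (FO2.and (R := fun T => T.descR) (fun x y => ⟨.desc x y, fun _ _ _ _ => Iff.rfl⟩)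
      FO2.eq.not).congr fun _ _ _ _ _ => transGen_ch
  have hns : FO2 (fun (T : UTree A) => TransGen (XStep.ns.rel T)) :=
    (FO2.and (R := fun T => T.sibR) (fun x y => ⟨.sib x y, fun _ _ _ _ => Iff.rfl⟩)
      FO2.eq.not).congr fun _ _ _ _ _ => transGen_ns
  cases st with
  | ch => exact hch
  | ns => exact hns
  | chI => exact hch.swap.congr fun T _ _ _ _ => transGen_swap (r := XStep.ch.rel T)
  | nsI => exact hns.swap.congr fun T _ _ _ _ => transGen_swap (r := XStep.ns.rel T)

theorem transGen_irrefl (T : UTree A) (st : XStep) (a : Node) : ¬ TransGen (st.rel T) a a := by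
  cases st with
  | ch => exact fun h => (transGen_ch.1 h).2 rfl
  | ns => exact fun h => (transGen_ns.1 h).2 rfl
  | chI => exact fun h => (transGen_ch.1 ((transGen_swap (r := XStep.ch.rel T)).1 h)).2 rfl
  | nsI => exact fun h => (transGen_ns.1 ((transGen_swap (r := XStep.ns.rel T)).1 h)).2 rfl

/-- Every step of Conditional XPath has unique successors or unique predecessors, so `(step/?α)⁺` is
first-order expressible from the transitive closure of the step. -/
theorem until_iff (T : UTree A) (st : XStep) (P : Node → Prop) (s t : Node) :
    TransGen (fun a b => st.rel T a b ∧ P b) s t ↔ TransGen (st.rel T) s t ∧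
      ∀ z, TransGen (st.rel T) s z → (z = t ∨ TransGen (st.rel T) z t) → P z := by
  cases st with
  | ch => exact until_iff_of_cofunctional (ch_cofunctional T) (transGen_irrefl T _) P s t
  | ns => exact until_iff_of_cofunctional (ns_cofunctional T) (transGen_irrefl T _) P s t
  | chI =>
    exact until_iff_of_functional (r := XStep.chI.rel T)
      (fun a b c h h' => ch_cofunctional T b c a h h') (transGen_irrefl T .chI) P s t
  | nsI =>
    exact until_iff_of_functional (r := XStep.nsI.rel T)
      (fun a b c h h' => ns_cofunctional T b c a h h') (transGen_irrefl T .nsI) P s t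

theorem FO2.step (st : XStep) : FO2 (fun (T : UTree A) => st.rel T) := by
  have h : ∀ st : XStep, (∀ (T : UTree A) a b c, st.rel T a c → st.rel T b c → a = b) →
      FO2 (fun (T : UTree A) => st.rel T) := by
    intro st hst
    refine ((FO2.transGen st).and ((FO2.transGen st).comp (FO2.transGen st)).not).congr
      fun T s _ t _ => ?_
    rw [step_iff_of_cofunctional (hst T) (transGen_irrefl T st)]
    refine and_congr_right fun _ => not_congr (exists_congr fun z => ?_)
    exact ⟨fun h => ⟨(transGen_dom h.1).2, h⟩, fun h => h.2⟩
  cases st with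
  | ch => exact h _ ch_cofunctional
  | ns => exact h _ ns_cofunctional
  | chI => exact (h _ ch_cofunctional).swap
  | nsI => exact (h _ ns_cofunctional).swap

theorem FO2.until (st : XStep) {P : UTree A → Node → Prop} (h : FO1 P) :
    FO2 (fun T => TransGen (fun a b => st.rel T a b ∧ P T b)) := by
  refine ((FO2.transGen st).and (((FO2.transGen st).and h.fst.swap.not).comp
    (FO2.eq.or (FO2.transGen st))).not).congr fun T s _ t ht => ?_
  rw [until_iff]
  refine and_congr_right fun _ => ⟨?_, fun h z hz hz' => ?_⟩
  · rintro h ⟨z, -, ⟨h1, h2⟩, h3⟩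
    exact h2 (h z h1 h3)
  · by_contra hP
    exact h ⟨z, (transGen_dom hz).2, ⟨hz, hP⟩, hz'⟩

/-! The two translations below are mutually recursive; the second clause for path formulas keeps the
witness of `Eβ` inside the tree domain, where first-order quantifiers range. -/

mutual
  theorem CXNode.fo : ∀ α : CXNode A, FO1 (fun T s => CXNode.Sat T s α)
    | .lab a => fun x => ⟨.lab a x, fun T v _ => by simp only [FO.Sat, CXNode.Sat]⟩
    | .not α => by
      simp only [CXNode.Sat]
      exact (CXNode.fo α).not
    | .or α β => by
      simp only [CXNode.Sat]
      exact (CXNode.fo α).or (CXNode.fo β)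
    | .E β => by
      obtain ⟨h, hd⟩ := CXPath.fo β
      intro x
      obtain ⟨φ, hφ⟩ := h.ex x
      refine ⟨φ, fun T v hx => (hφ T v hx).trans ?_⟩
      simp only [CXNode.Sat]
      exact exists_congr fun t => ⟨fun h => h.2, fun h => ⟨hd T _ t hx h, h⟩⟩
  theorem CXPath.fo : ∀ β : CXPath A, FO2 (fun T s t => CXPath.Sat T s t β) ∧
      ∀ (T : UTree A) s t, s ∈ T.dom → CXPath.Sat T s t β → t ∈ T.dom
    | .test α => by
      simp only [CXPath.Sat]
      exact ⟨FO2.eq.and (CXNode.fo α).fst, fun T s t hs h => h.1 ▸ hs⟩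
    | .step st => by
      simp only [CXPath.Sat]
      exact ⟨FO2.step st, fun T s t _ h => (XStep.rel_dom h).2⟩
    | .until st α => by
      simp only [CXPath.Sat, chain_iff]
      refine ⟨FO2.until st (CXNode.fo α), fun T s t _ h => ?_⟩
      exact (transGen_dom ((until_iff _ _ _ _ _).1 h).1).2
    | .comp β γ => by
      obtain ⟨h, hd⟩ := CXPath.fo β
      obtain ⟨h', hd'⟩ := CXPath.fo γ
      simp only [CXPath.Sat]
      refine ⟨(h.comp h').congr fun T s hs t _ => exists_congr fun u =>
        ⟨fun h => ⟨hd T _ _ hs h.1, h⟩, fun h => h.2⟩, ?_⟩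
      rintro T s t hs ⟨u, h1, h2⟩
      exact hd' _ _ _ (hd _ _ _ hs h1) h2
    | .or β γ => by
      obtain ⟨h, hd⟩ := CXPath.fo β
      obtain ⟨h', hd'⟩ := CXPath.fo γ
      simp only [CXPath.Sat]
      exact ⟨h.or h', fun T s t hs h => h.elim (hd _ _ _ hs) (hd' _ _ _ hs)⟩
end

end Proof

/-- The node formulas of Conditional XPath have precisely the
power of unary FO queries over ordered unranked Σ-trees. -/
theorem cxpath_iff_fo (A : Type) [Fintype A]
    (Q : UTree A → Set Node) (hQ : ∀ T, Q T ⊆ ↑T.dom) :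
    (∃ α : CXNode A, ∀ (T : UTree A) (s : Node), s ∈ T.dom →
        (s ∈ Q T ↔ CXNode.Sat T s α)) ↔
    (∃ φ : FO A, φ.DefinesU Q) := by
  constructor
  · rintro ⟨α, hα⟩
    obtain ⟨φ, hφ⟩ := CXNode.fo α 0
    refine ⟨φ, fun T v s hs => (hα T s hs).trans ?_⟩
    have := hφ T (Function.update v 0 s)
    rw [Function.update_self] at this
    exact (this hs).symm
  · rintro ⟨φ, hφ⟩
    obtain ⟨α, hα⟩ := defN_of_fo φ
    refine ⟨α, fun T s hs => ?_⟩
    have := hφ T (fun _ => s) s hs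
    rw [Function.update_eq_self] at this
    exact this.trans (hα ⟨T, s, hs⟩)

end UnrankedTrees
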